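/- arXiv:2010.14614 — 2 statements merged into one kernel-verified Lean document; each statement's English description precedes it below -/
import Mathlib

section
/- Let α < 0, γ < 0 and β ∈ ℝ, and let (u,v) be a regular solution of the Schrödinger–Korteweg–de Vries system with these parameters. Then for every exponent p₁ with 0 < p₁ < 2/3 and every constant K > 0, liminf_{t→∞} ∫_{{x : |x| ≤ K·t^{p₁}}} ( v(t,x)² + |u(t,x)|² ) dx = 0; in particular liminf_{t→∞} ∫_{{|x| ≤ K t^{p₁}}} v(t,x)² dx = 0 and liminf_{t→∞} ∫_{{|x| ≤ K t^{p₁}}} |u(t,x)|² dx = 0. -/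
open MeasureTheory Filter

/-- A regular solution of the Schrödinger–Korteweg–de Vries system
    `i ∂ₜu + ∂ₓ²u = α u v + β u |u|²`,
    `∂ₜv + ∂ₓ³v + v ∂ₓv = γ ∂ₓ(|u|²)`:
    `u, v` are smooth in `(t,x)`, Schwartz in `x` for each fixed `t`, satisfy the
    equations pointwise, and have uniformly-in-time bounded `H¹ₓ` norms. -/
def IsSKdVSolution (α β γ : ℝ) (u : ℝ → ℝ → ℂ) (v : ℝ → ℝ → ℝ) : Prop :=
  ContDiff ℝ (⊤ : ℕ∞) (fun p : ℝ × ℝ => u p.1 p.2) ∧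
  ContDiff ℝ (⊤ : ℕ∞) (fun p : ℝ × ℝ => v p.1 p.2) ∧
  (∀ t : ℝ, ∃ f : SchwartzMap ℝ ℂ, ∀ x, f x = u t x) ∧
  (∀ t : ℝ, ∃ g : SchwartzMap ℝ ℝ, ∀ x, g x = v t x) ∧
  (∀ t x : ℝ,
    Complex.I * deriv (fun s => u s x) t + iteratedDeriv 2 (u t) x
      = (α : ℂ) * u t x * (v t x : ℂ) + (β : ℂ) * u t x * (‖u t x‖ : ℂ) ^ 2) ∧
  (∀ t x : ℝ,
    deriv (fun s => v s x) t + iteratedDeriv 3 (v t) x + v t x * deriv (v t) x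
      = γ * deriv (fun y => ‖u t y‖ ^ 2) x) ∧
  (∃ C : ℝ, ∀ t : ℝ,
    (∫ x : ℝ, ‖u t x‖ ^ 2) + (∫ x : ℝ, ‖deriv (u t) x‖ ^ 2) +
      (∫ x : ℝ, (v t x) ^ 2) + (∫ x : ℝ, (deriv (v t) x) ^ 2) ≤ C)

lemma skdv_liminf_zero (g : ℝ → ℝ) (h0 : ∀ t, 0 ≤ g t)
    (h : ∀ δ > 0, ∃ᶠ t in atTop, g t ≤ δ) : liminf g atTop = 0 := by
  have hb : IsBoundedUnder (· ≥ ·) atTop g := isBoundedUnder_of ⟨0, h0⟩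
  apply le_antisymm
  · apply le_of_forall_pos_le_add
    intro ε hε
    rw [zero_add]
    exact liminf_le_of_frequently_le (h ε hε) hb
  · apply le_liminf_of_le
    · exact IsCoboundedUnder.of_frequently_le (h 1 one_pos)
    · exact Eventually.of_forall h0

lemma skdv_cutoff : ∃ (ψ φ φ1 φ2 : ℝ → ℝ) (M : ℝ), 0 ≤ M ∧
    (∀ y, HasDerivAt ψ (φ y) y) ∧ (∀ y, HasDerivAt φ (φ1 y) y) ∧ (∀ y, HasDerivAt φ1 (φ2 y) y) ∧
    Continuous φ2 ∧ (∀ y, 0 ≤ φ y) ∧ (∀ y, φ y ≤ 1) ∧ (∀ y, |y| ≤ 1 → φ y = 1) ∧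
    (∀ y, 2 < |y| → φ y = 0 ∧ φ1 y = 0) ∧
    (∀ y, 2 < y → ψ y = ψ 2) ∧ (∀ y, y < -2 → ψ y = ψ (-2)) ∧
    (∀ y, |ψ y| ≤ M) ∧ (∀ y, |φ2 y| ≤ M) ∧ (∀ y, |y * φ y| ≤ 2) := by
  let φ : ContDiffBump (0 : ℝ) := ⟨1, 2, one_pos, one_lt_two⟩
  have hφs : ContDiff ℝ 2 φ := φ.contDiff
  have hφc : Continuous φ := φ.continuous
  have hz : ∀ y : ℝ, 2 ≤ |y| → φ y = 0 := fun y hy =>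
    φ.zero_of_le_dist (by simpa [Real.dist_eq] using hy)
  have h1s : ContDiff ℝ 1 (deriv φ) := by
    have : ContDiff ℝ (1 + 1) φ := by simpa [one_add_one_eq_two] using hφs
    exact (contDiff_succ_iff_deriv.1 this).2.2
  have hφd : ∀ y, HasDerivAt φ (deriv φ y) y := fun y =>
    ((hφs.differentiable (by norm_num)) y).hasDerivAt
  have h1d : ∀ y, HasDerivAt (deriv φ) (deriv (deriv φ) y) y := fun y =>
    ((h1s.differentiable (by norm_num)) y).hasDerivAt
  have h2c : Continuous (deriv (deriv φ)) := h1s.continuous_deriv le_rfl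
  let ψ : ℝ → ℝ := fun y => ∫ x in (0:ℝ)..y, φ x
  have hψd : ∀ y, HasDerivAt ψ (φ y) y := fun y =>
    intervalIntegral.integral_hasDerivAt_right (hφc.intervalIntegrable _ _)
      hφc.stronglyMeasurable.stronglyMeasurableAtFilter hφc.continuousAt
  have hψp : ∀ y, 2 ≤ y → ψ y = ψ 2 := by
    intro y hy
    have : ψ 2 + ∫ x in (2:ℝ)..y, φ x = ψ y :=
      intervalIntegral.integral_add_adjacent_intervals (hφc.intervalIntegrable _ _)
        (hφc.intervalIntegrable _ _)
    rw [← this, intervalIntegral.integral_zero_ae, add_zero]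
    refine Eventually.of_forall fun x hx => hz x ?_
    rw [Set.uIoc_of_le hy] at hx
    exact hx.1.le.trans (le_abs_self x)
  have hψm : ∀ y, y ≤ -2 → ψ y = ψ (-2) := by
    intro y hy
    have : ψ y + ∫ x in y..(-2:ℝ), φ x = ψ (-2) :=
      intervalIntegral.integral_add_adjacent_intervals (hφc.intervalIntegrable _ _)
        (hφc.intervalIntegrable _ _)
    rw [← this, intervalIntegral.integral_zero_ae, add_zero]
    refine Eventually.of_forall fun x hx => hz x ?_
    rw [Set.uIoc_of_le hy] at hx
    have := neg_le_abs x
    linarith [hx.2]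
  have hφ1 : ∀ y : ℝ, 2 < |y| → deriv φ y = 0 := by
    intro y hy
    have : (φ : ℝ → ℝ) =ᶠ[nhds y] fun _ => 0 := by
      filter_upwards [(isOpen_lt continuous_const continuous_abs).mem_nhds hy] with x hx
      exact hz x (le_of_lt hx)
    rw [this.deriv_eq]; simp
  have hφ2 : ∀ y : ℝ, 2 < |y| → deriv (deriv φ) y = 0 := by
    intro y hy
    have : (deriv φ : ℝ → ℝ) =ᶠ[nhds y] fun _ => 0 := by
      filter_upwards [(isOpen_lt continuous_const continuous_abs).mem_nhds hy] with x hx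
      exact hφ1 x hx
    rw [this.deriv_eq]; simp
  have hψc : Continuous ψ := continuous_iff_continuousAt.2 fun y => (hψd y).continuousAt
  obtain ⟨M1, hM1⟩ := (isCompact_Icc (a := (-2:ℝ)) (b := 2)).exists_bound_of_continuousOn
    hψc.continuousOn
  obtain ⟨M2, hM2⟩ := (isCompact_Icc (a := (-2:ℝ)) (b := 2)).exists_bound_of_continuousOn
    h2c.continuousOn
  have hM2' : 0 ≤ M2 := (norm_nonneg _).trans (hM2 0 (by constructor <;> norm_num))
  refine ⟨ψ, φ, deriv φ, deriv (deriv φ), max M1 M2, hM2'.trans (le_max_right _ _), hψd, hφd,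
    h1d, h2c, φ.nonneg', fun y => φ.le_one, ?_, fun y hy => ⟨hz y hy.le, hφ1 y hy⟩,
    fun y hy => hψp y hy.le, fun y hy => hψm y hy.le, ?_, ?_, ?_⟩
  · intro y hy
    exact φ.one_of_mem_closedBall (by simpa [Real.dist_eq] using hy)
  · intro y
    refine le_trans ?_ (le_max_left _ _)
    rcases le_or_gt y (-2) with h | h
    · rw [hψm y h]; exact hM1 _ (by constructor <;> norm_num)
    rcases le_or_gt 2 y with h' | h'
    · rw [hψp y h']; exact hM1 _ (by constructor <;> norm_num)
    exact hM1 y ⟨h.le, h'.le⟩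
  · intro y
    rcases lt_or_ge 2 |y| with h | h
    · rw [hφ2 y h, abs_zero]; exact hM2'.trans (le_max_right _ _)
    · exact (hM2 y (abs_le.1 h)).trans (le_max_right _ _)
  · intro y
    rcases lt_or_ge 2 |y| with h | h
    · rw [hz y h.le]; simp
    · rw [abs_mul, abs_of_nonneg (φ.nonneg' y)]
      nlinarith [φ.nonneg' y, φ.le_one (x := y), abs_nonneg y]

lemma skdv_param (g g' : ℝ → ℝ → ℝ) (R t : ℝ) (ht : 0 < t)
    (hg : ∀ s, 0 < s → Continuous (g s))
    (hd : ∀ s, 0 < s → ∀ x, HasDerivAt (fun s => g s x) (g' s x) s)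
    (hg' : ContinuousOn (fun p : ℝ × ℝ => g' p.1 p.2) (Set.Ioi 0 ×ˢ Set.univ)) :
    HasDerivAt (fun s => ∫ x in (-R)..R, g s x) (∫ x in (-R)..R, g' t x) t := by
  have hs : Set.Icc (t/2) (2*t) ∈ nhds t := Icc_mem_nhds (by linarith) (by linarith)
  have hg'c : ∀ s, 0 < s → Continuous (g' s) := by
    intro s hs
    have := hg'.comp_continuous (f := fun x : ℝ => (s, x)) (by fun_prop) (by intro x; simp [hs])
    exact this
  obtain ⟨B, hB⟩ := ((isCompact_Icc (a := t/2) (b := 2*t)).prod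
    (isCompact_uIcc (a := -R) (b := R))).exists_bound_of_continuousOn
    (hg'.mono (Set.prod_mono (fun s hs => lt_of_lt_of_le (half_pos ht) hs.1) (Set.subset_univ _)))
  refine (intervalIntegral.hasDerivAt_integral_of_dominated_loc_of_deriv_le (F := g) (F' := g')
    (bound := fun _ => B) hs ?_ ((hg t ht).intervalIntegrable _ _) 
    (hg'c t ht).aestronglyMeasurable ?_ intervalIntegrable_const ?_).2
  · filter_upwards [lt_mem_nhds ht] with s hs
    exact (hg s hs).aestronglyMeasurable
  · refine Eventually.of_forall fun x hx s hs => ?_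
    exact hB (s, x) ⟨hs, Set.uIoc_subset_uIcc hx⟩
  · refine Eventually.of_forall fun x hx s hs => ?_
    exact hd s (lt_of_lt_of_le (half_pos ht) hs.1) x

lemma skdv_key (γ : ℝ) (v w : ℝ → ℝ → ℝ)
    (hV : ContDiff ℝ (⊤ : ℕ∞) (fun p : ℝ × ℝ => v p.1 p.2))
    (hw : ∀ t, ContDiff ℝ 1 (w t))
    (hpde : ∀ t x, deriv (fun s => v s x) t + iteratedDeriv 3 (v t) x + v t x * deriv (v t) x
      = γ * deriv (w t) x)
    (ψ φ φ1 φ2 : ℝ → ℝ)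
    (hψ : ∀ y, HasDerivAt ψ (φ y) y) (hφ : ∀ y, HasDerivAt φ (φ1 y) y)
    (hφ1 : ∀ y, HasDerivAt φ1 (φ2 y) y) (hφ2 : Continuous φ2)
    (hz : ∀ y, 2 < |y| → φ y = 0 ∧ φ1 y = 0)
    (hp : ∀ y, 2 < y → ψ y = ψ 2) (hm : ∀ y, y < -2 → ψ y = ψ (-2))
    (k m k' m' : ℝ → ℝ)
    (hk : ∀ s, 0 < s → HasDerivAt k (k' s) s) (hm' : ∀ s, 0 < s → HasDerivAt m (m' s) s)
    (hk'c : ContinuousOn k' (Set.Ioi 0)) (hm'c : ContinuousOn m' (Set.Ioi 0))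
    (R t : ℝ) (ht : 0 < t) (hkR : 2 < R * k t) (hmR : 2 < R * m t) :
    HasDerivAt (fun s => ∫ x in (-R)..R, v s x * (ψ (x * k s) - ψ (x * m s)))
      (∫ x in (-R)..R, ((v t x ^ 2 / 2 - γ * w t x) * (k t * φ (x * k t) - m t * φ (x * m t))
        + v t x * (k t ^ 3 * φ2 (x * k t) - m t ^ 3 * φ2 (x * m t))
        + v t x * (x * k' t * φ (x * k t) - x * m' t * φ (x * m t)))) t := by
  have hψc : Continuous ψ := continuous_iff_continuousAt.2 fun y => (hψ y).continuousAt
  have hφc : Continuous φ := continuous_iff_continuousAt.2 fun y => (hφ y).continuousAt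
  have hφ1c : Continuous φ1 := continuous_iff_continuousAt.2 fun y => (hφ1 y).continuousAt
  have hkc : ContinuousOn k (Set.Ioi 0) := fun s hs => (hk s hs).continuousAt.continuousWithinAt
  have hmc : ContinuousOn m (Set.Ioi 0) := fun s hs => (hm' s hs).continuousAt.continuousWithinAt
  have hvs : ∀ s, ContDiff ℝ (⊤ : ℕ∞) (v s) := fun s =>
    hV.comp (f := fun x : ℝ => (s, x)) (by fun_prop)
  have hvt : ∀ s x, HasDerivAt (fun s => v s x) (deriv (fun s => v s x) s) s := by
    intro s x
    have : ContDiff ℝ (⊤ : ℕ∞) (fun s => v s x) :=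
      hV.comp (f := fun s : ℝ => (s, x)) (by fun_prop)
    exact (this.differentiable (by simp) s).hasDerivAt
  have hvtc : Continuous (fun p : ℝ × ℝ => deriv (fun s => v s p.2) p.1) := by
    have h1 : ∀ p : ℝ × ℝ, deriv (fun s => v s p.2) p.1
        = fderiv ℝ (fun p : ℝ × ℝ => v p.1 p.2) p (1, 0) := by
      intro p
      have h2 : HasFDerivAt (fun p : ℝ × ℝ => v p.1 p.2)
          (fderiv ℝ (fun p : ℝ × ℝ => v p.1 p.2) p) p :=
        (hV.differentiable (by simp) p).hasFDerivAt
      have h3 : HasDerivAt (fun s : ℝ => (s, p.2)) ((1 : ℝ), (0 : ℝ)) p.1 :=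
        (hasDerivAt_id p.1).prodMk (hasDerivAt_const p.1 p.2)
      exact (HasFDerivAt.comp_hasDerivAt p.1 (by simpa using h2) h3).deriv
    simp_rw [h1]
    exact (hV.continuous_fderiv (by simp)).clm_apply continuous_const
  have hmain := skdv_param (fun s x => v s x * (ψ (x * k s) - ψ (x * m s)))
    (fun s x => deriv (fun s => v s x) s * (ψ (x * k s) - ψ (x * m s))
      + v s x * (φ (x * k s) * (x * k' s) - φ (x * m s) * (x * m' s))) R t ht
    (fun s hs => by
      have := (hvs s).continuous
      fun_prop)
    (fun s hs x => by
      refine (hvt s x).mul (HasDerivAt.sub ?_ ?_)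
      · exact (hψ (x * k s)).comp s ((hk s hs).const_mul x)
      · exact (hψ (x * m s)).comp s ((hm' s hs).const_mul x))
    (by
      have e1 : ∀ h : ℝ → ℝ, ContinuousOn h (Set.Ioi 0) →
          ContinuousOn (fun p : ℝ × ℝ => p.2 * h p.1) (Set.Ioi 0 ×ˢ Set.univ) := fun h hh =>
        continuousOn_snd.mul (hh.comp continuousOn_fst (fun p hp => hp.1))
      refine ContinuousOn.add (hvtc.continuousOn.mul (ContinuousOn.sub ?_ ?_))
        (hV.continuous.continuousOn.mul (ContinuousOn.sub (ContinuousOn.mul ?_ (e1 _ hk'c))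
          (ContinuousOn.mul ?_ (e1 _ hm'c))))
      · exact hψc.comp_continuousOn (e1 _ hkc)
      · exact hψc.comp_continuousOn (e1 _ hmc)
      · exact hφc.comp_continuousOn (e1 _ hkc)
      · exact hφc.comp_continuousOn (e1 _ hmc))
  convert hmain using 1
  -- integration by parts
  have hvc : Continuous (v t) := (hvs t).continuous
  have hwc : Continuous (w t) := (hw t).continuous
  have hd1 : ContDiff ℝ (⊤ : ℕ∞) (deriv (v t)) := (contDiff_infty_iff_deriv.1 (hvs t)).2
  have hd2 : ContDiff ℝ (⊤ : ℕ∞) (deriv (deriv (v t))) := (contDiff_infty_iff_deriv.1 hd1).2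
  have hd3 : ContDiff ℝ (⊤ : ℕ∞) (deriv (deriv (deriv (v t)))) := (contDiff_infty_iff_deriv.1 hd2).2
  have hit : iteratedDeriv 3 (v t) = deriv (deriv (deriv (v t))) := by
    simp [iteratedDeriv_succ, iteratedDeriv_zero]
  have hvtx : Continuous (fun x => deriv (fun s => v s x) t) :=
    hvtc.comp (f := fun x : ℝ => ((t, x) : ℝ × ℝ)) (by fun_prop)
  set a := k t with ha
  set b := m t with hb
  have hψa : ∀ c x : ℝ, HasDerivAt (fun x => ψ (x * c)) (φ (x * c) * c) x := fun c x => by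
    exact (hψ (x * c)).comp x (hasDerivAt_mul_const c)
  have hφa : ∀ c x : ℝ, HasDerivAt (fun x => φ (x * c)) (φ1 (x * c) * c) x := fun c x => by
    exact (hφ (x * c)).comp x (hasDerivAt_mul_const c)
  have hφ1a : ∀ c x : ℝ, HasDerivAt (fun x => φ1 (x * c)) (φ2 (x * c) * c) x := fun c x => by
    exact (hφ1 (x * c)).comp x (hasDerivAt_mul_const c)
  have D : ∀ n : ℕ∞, ∀ h : ℝ → ℝ, ContDiff ℝ (⊤ : ℕ∞) h → ∀ x, HasDerivAt h (deriv h x) x :=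
    fun n h hh x => (hh.differentiable (by simp) x).hasDerivAt
  let Q : ℝ → ℝ := fun x =>
    (-(deriv (deriv (v t)) x) - v t x ^ 2 / 2 + γ * w t x) * (ψ (x * a) - ψ (x * b))
    + deriv (v t) x * (φ (x * a) * a - φ (x * b) * b)
    - v t x * (φ1 (x * a) * a * a - φ1 (x * b) * b * b)
  have hQ : ∀ x, HasDerivAt Q (deriv (fun s => v s x) t * (ψ (x * a) - ψ (x * b))
      - ((v t x ^ 2 / 2 - γ * w t x) * (a * φ (x * a) - b * φ (x * b))
        + v t x * (a ^ 3 * φ2 (x * a) - b ^ 3 * φ2 (x * b)))) x := by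
    intro x
    have h0 := D 0 _ (hvs t) x
    have h1 := D 0 _ hd1 x
    have h2 := D 0 _ hd2 x
    have hw1 : HasDerivAt (w t) (deriv (w t) x) x :=
      ((hw t).differentiable (by norm_num) x).hasDerivAt
    have := ((((h2.neg.sub ((h0.pow 2).div_const 2)).add (hw1.const_mul γ)).mul
      ((hψa a x).sub (hψa b x))).add
      (h1.mul (((hφa a x).mul_const a).sub ((hφa b x).mul_const b)))).sub
      (h0.mul ((((hφ1a a x).mul_const a).mul_const a).sub
        (((hφ1a b x).mul_const b).mul_const b)))
    refine this.congr_deriv ?_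
    have e := hpde t x
    rw [hit] at e
    have e' : deriv (fun s => v s x) t = γ * deriv (w t) x - v t x * deriv (v t) x
      - deriv (deriv (deriv (v t))) x := by linarith
    rw [e']
    simp only [Pi.pow_apply, Pi.neg_apply, Pi.sub_apply, Pi.add_apply]
    push_cast
    ring
  have hI := intervalIntegral.integral_eq_sub_of_hasDerivAt (a := -R) (b := R)
    (fun x _ => hQ x) (by
      apply Continuous.intervalIntegrable
      fun_prop)
  have hQR : Q R = 0 := by
    have h1 := hz (R * a) (hkR.trans_le (le_abs_self _))
    have h2 := hz (R * b) (hmR.trans_le (le_abs_self _))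
    simp only [Q, hp _ hkR, hp _ hmR, h1.1, h1.2, h2.1, h2.2]; ring
  have hQR' : Q (-R) = 0 := by
    have h1 := hz (-R * a) (by rw [neg_mul, abs_neg]; exact hkR.trans_le (le_abs_self _))
    have h2 := hz (-R * b) (by rw [neg_mul, abs_neg]; exact hmR.trans_le (le_abs_self _))
    simp only [Q, hm (-R * a) (by linarith), hm (-R * b) (by linarith), h1.1, h1.2, h2.1, h2.2]
    ring
  rw [hQR, hQR', sub_zero] at hI
  rw [← sub_eq_zero, ← neg_eq_zero, ← hI, neg_sub, ← intervalIntegral.integral_sub]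
  · congr 1; ext x; ring
  all_goals
    apply Continuous.intervalIntegrable
    fun_prop

lemma skdv_abs_int (V W : ℝ → ℝ) (hV : Continuous V) (hW : Continuous W) (hW0 : ∀ x, 0 ≤ W x)
    (R C s A : ℝ) (hR : 0 ≤ R) (hs : 0 < s) (hA : 0 ≤ A)
    (hC : ∫ x in (-R)..R, (V x ^ 2 + W x) ≤ C) :
    ∫ x in (-R)..R, |V x| * A ≤ A * (s * C + 2 * R / s) := by
  calc ∫ x in (-R)..R, |V x| * A ≤ ∫ x in (-R)..R, (A * s * (V x ^ 2 + W x) + A / s) := by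
        apply intervalIntegral.integral_mono_on (by linarith)
        · exact (by fun_prop : Continuous fun x => |V x| * A).intervalIntegrable _ _
        · exact (by fun_prop : Continuous fun x => A * s * (V x ^ 2 + W x) + A / s).intervalIntegrable _ _
        · intro x _
          have h1 : |V x| ≤ s * (V x ^ 2 + W x) + 1 / s := by
            have h2 : s * |V x| ≤ s * (s * (V x ^ 2 + W x) + 1 / s) := by
              have : s * (s * (V x ^ 2 + W x) + 1 / s) = s ^ 2 * |V x| ^ 2 + s ^ 2 * W x + 1 := by
                rw [sq_abs]; field_simp
              rw [this]
              nlinarith [sq_nonneg (s * |V x| - 1), mul_nonneg (sq_nonneg s) (hW0 x),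
                mul_nonneg hs.le (abs_nonneg (V x))]
            exact le_of_mul_le_mul_left h2 hs
          calc |V x| * A ≤ (s * (V x ^ 2 + W x) + 1 / s) * A := by gcongr
            _ = _ := by ring
    _ = A * s * (∫ x in (-R)..R, (V x ^ 2 + W x)) + 2 * R * (A / s) := by
        rw [intervalIntegral.integral_add, intervalIntegral.integral_const_mul,
          intervalIntegral.integral_const]
        · simp only [smul_eq_mul]; ring
        · exact (by fun_prop : Continuous fun x => A * s * (V x ^ 2 + W x)).intervalIntegrable _ _
        · exact intervalIntegrable_const
    _ ≤ A * s * C + 2 * R * (A / s) := by gcongr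
    _ = _ := by ring

lemma skdv_lower (γ : ℝ) (hγ : γ < 0) (V W : ℝ → ℝ) (hV : Continuous V) (hW : Continuous W)
    (hW0 : ∀ x, 0 ≤ W x) (φ φ2 : ℝ → ℝ) (hφ : Continuous φ) (hφ2 : Continuous φ2)
    (M : ℝ) (h0 : ∀ y, 0 ≤ φ y) (h1 : ∀ y, φ y ≤ 1)
    (h11 : ∀ y, |y| ≤ 1 → φ y = 1) (hM2 : ∀ y, |φ2 y| ≤ M) (hyφ : ∀ y, |y * φ y| ≤ 2)
    (a b t p q r R C s δ : ℝ) (ha : 0 < a) (hb : 0 < b) (ht : 0 < t) (hp : 0 < p) (hq : 0 < q)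
    (hr : 0 ≤ r) (hrR : r < R) (hra : r * a ≤ 1) (hs : 0 < s) (hM : 0 ≤ M)
    (hC : ∫ x in (-R)..R, (V x ^ 2 + W x) ≤ C)
    (hδ : δ ≤ ∫ x in {x : ℝ | |x| ≤ r}, (V x ^ 2 + W x)) :
    min (1 / 2) (-γ) * a * δ - (1 / 2 - γ) * b * C
      - (M * (a ^ 3 + b ^ 3) + 2 * (p + q) / t) * (s * C + 2 * R / s) ≤
    ∫ x in (-R)..R, ((V x ^ 2 / 2 - γ * W x) * (a * φ (x * a) - b * φ (x * b))
        + V x * (a ^ 3 * φ2 (x * a) - b ^ 3 * φ2 (x * b))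
        + V x * (x * (-(p / t) * a) * φ (x * a) - x * (-(q / t) * b) * φ (x * b))) := by
  set κ := min (1 / 2) (-γ) with hκ
  have hκ0 : 0 < κ := lt_min (by norm_num) (by linarith)
  set A := M * (a ^ 3 + b ^ 3) + 2 * (p + q) / t with hA
  have hA0 : 0 ≤ A := by positivity
  have hS : {x : ℝ | |x| ≤ r} = Set.Icc (-r) r := by ext x; simp [abs_le]
  rw [hS] at hδ
  have habs := skdv_abs_int V W hV hW hW0 R C s A (by linarith) hs hA0 hC
  let E : ℝ → ℝ := fun x => V x ^ 2 + W x
  have hE : Continuous E := by fun_prop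
  have hE0 : ∀ x, 0 ≤ E x := fun x => add_nonneg (sq_nonneg _) (hW0 x)
  have hind : IntervalIntegrable ((Set.Icc (-r) r).indicator E) volume (-R) R := by
    rw [intervalIntegrable_iff]
    apply IntegrableOn.indicator _ measurableSet_Icc
    exact intervalIntegrable_iff.1 (hE.intervalIntegrable _ _)
  have hindI : ∫ x in (-R)..R, (Set.Icc (-r) r).indicator E x = ∫ x in Set.Icc (-r) r, E x := by
    rw [intervalIntegral.integral_of_le (by linarith), setIntegral_indicator measurableSet_Icc]
    congr 2
    apply Set.inter_eq_right.2
    intro x hx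
    exact ⟨by linarith [hx.1], by linarith [hx.2]⟩
  have hi1 : IntervalIntegrable (fun x => κ * a * (Set.Icc (-r) r).indicator E x) volume (-R) R :=
    hind.const_mul _
  have hi2 : IntervalIntegrable (fun x => (1 / 2 - γ) * b * E x) volume (-R) R :=
    (hE.intervalIntegrable _ _).const_mul _
  have hi3 : IntervalIntegrable (fun x => |V x| * A) volume (-R) R :=
    (by fun_prop : Continuous fun x => |V x| * A).intervalIntegrable _ _
  calc _ ≤ κ * a * (∫ x in Set.Icc (-r) r, E x) - (1 / 2 - γ) * b * (∫ x in (-R)..R, E x)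
        - ∫ x in (-R)..R, |V x| * A := by
        have e1 : κ * a * δ ≤ κ * a * (∫ x in Set.Icc (-r) r, E x) := by gcongr
        have e2 : (1 / 2 - γ) * b * (∫ x in (-R)..R, E x) ≤ (1 / 2 - γ) * b * C := by
          have : 0 ≤ 1 / 2 - γ := by linarith
          gcongr
        linarith
    _ = ∫ x in (-R)..R, (κ * a * (Set.Icc (-r) r).indicator E x - (1 / 2 - γ) * b * E x
          - |V x| * A) := by
        rw [intervalIntegral.integral_sub (hi1.sub hi2) hi3, intervalIntegral.integral_sub hi1 hi2,
          intervalIntegral.integral_const_mul, intervalIntegral.integral_const_mul, hindI]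
    _ ≤ _ := by
        apply intervalIntegral.integral_mono_on (by linarith) ((hi1.sub hi2).sub hi3)
        · apply Continuous.intervalIntegrable
          fun_prop
        intro x _
        have hN0 : 0 ≤ V x ^ 2 / 2 - γ * W x := by nlinarith [sq_nonneg (V x), hW0 x]
        have hN1 : V x ^ 2 / 2 - γ * W x ≤ (1 / 2 - γ) * E x := by
          simp only [E]; nlinarith [sq_nonneg (V x), hW0 x]
        have hN2 : κ * E x ≤ V x ^ 2 / 2 - γ * W x := by
          have k1 : κ ≤ 1 / 2 := min_le_left _ _
          have k2 : κ ≤ -γ := min_le_right _ _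
          simp only [E]; nlinarith [sq_nonneg (V x), hW0 x]
        have s1 : κ * a * (Set.Icc (-r) r).indicator E x
            ≤ (V x ^ 2 / 2 - γ * W x) * (a * φ (x * a)) := by
          by_cases hx : x ∈ Set.Icc (-r) r
          · rw [Set.indicator_of_mem hx, h11 (x * a), mul_one]
            · nlinarith
            · rw [abs_mul, abs_of_pos ha]
              exact (mul_le_mul_of_nonneg_right (abs_le.2 hx) ha.le).trans hra
          · rw [Set.indicator_of_notMem hx, mul_zero]
            exact mul_nonneg hN0 (mul_nonneg ha.le (h0 _))
        have s2 : (V x ^ 2 / 2 - γ * W x) * (b * φ (x * b)) ≤ (1 / 2 - γ) * b * E x := by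
          calc _ ≤ ((1 / 2 - γ) * E x) * (b * 1) := by
                apply mul_le_mul hN1 _ (mul_nonneg hb.le (h0 _)) (hN0.trans hN1)
                exact mul_le_mul_of_nonneg_left (h1 _) hb.le
            _ = _ := by ring
        have s3 : |a ^ 3 * φ2 (x * a) - b ^ 3 * φ2 (x * b)
            + (x * (-(p / t) * a) * φ (x * a) - x * (-(q / t) * b) * φ (x * b))| ≤ A := by
          have g1 : |a ^ 3 * φ2 (x * a)| ≤ a ^ 3 * M := by
            rw [abs_mul, abs_of_pos (by positivity : 0 < a ^ 3)]
            exact mul_le_mul_of_nonneg_left (hM2 _) (by positivity)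
          have g2 : |b ^ 3 * φ2 (x * b)| ≤ b ^ 3 * M := by
            rw [abs_mul, abs_of_pos (by positivity : 0 < b ^ 3)]
            exact mul_le_mul_of_nonneg_left (hM2 _) (by positivity)
          have g3 : |p / t * (x * a * φ (x * a))| ≤ p / t * 2 := by
            rw [abs_mul, abs_of_pos (by positivity : 0 < p / t)]
            exact mul_le_mul_of_nonneg_left (hyφ _) (by positivity)
          have g4 : |q / t * (x * b * φ (x * b))| ≤ q / t * 2 := by
            rw [abs_mul, abs_of_pos (by positivity : 0 < q / t)]
            exact mul_le_mul_of_nonneg_left (hyφ _) (by positivity)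
          have hA' : A = a ^ 3 * M + b ^ 3 * M + p / t * 2 + q / t * 2 := by rw [hA]; ring
          have hid : a ^ 3 * φ2 (x * a) - b ^ 3 * φ2 (x * b)
            + (x * (-(p / t) * a) * φ (x * a) - x * (-(q / t) * b) * φ (x * b))
            = a ^ 3 * φ2 (x * a) - b ^ 3 * φ2 (x * b) - p / t * (x * a * φ (x * a))
              + q / t * (x * b * φ (x * b)) := by ring
          rw [hA', hid]
          have g1' := abs_le.1 g1
          have g2' := abs_le.1 g2
          have g3' := abs_le.1 g3
          have g4' := abs_le.1 g4
          exact abs_le.2 ⟨by linarith [g1'.1, g2'.2, g3'.2, g4'.1],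
            by linarith [g1'.2, g2'.1, g3'.1, g4'.2]⟩
        have s4 := neg_abs_le (V x * (a ^ 3 * φ2 (x * a) - b ^ 3 * φ2 (x * b)
            + (x * (-(p / t) * a) * φ (x * a) - x * (-(q / t) * b) * φ (x * b))))
        rw [abs_mul] at s4
        have s5 := mul_le_mul_of_nonneg_left s3 (abs_nonneg (V x))
        rw [mul_sub]
        linarith

lemma skdv_rpow (A e g ε : ℝ) (h : e < g) (hε : 0 < ε) : ∀ᶠ t : ℝ in atTop, A * t ^ e ≤ ε * t ^ g := by
  have h1 : Tendsto (fun t : ℝ => A * t ^ (-(g - e))) atTop (nhds (A * 0)) :=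
    (tendsto_rpow_neg_atTop (by linarith)).const_mul A
  rw [mul_zero] at h1
  filter_upwards [h1.eventually_lt_const hε, eventually_gt_atTop 0] with t ht h0
  have : t ^ e = t ^ (-(g - e)) * t ^ g := by rw [← Real.rpow_add h0]; congr 1; ring
  rw [this, ← mul_assoc]
  exact mul_le_mul_of_nonneg_right ht.le (Real.rpow_nonneg h0.le _)

lemma skdv_ode (F F' : ℝ → ℝ) (p q c B : ℝ) (hp : p < 1) (hq : q / 2 < 1 - p) (hc : 0 < c)
    (hF : ∀ᶠ t in atTop, HasDerivAt F (F' t) t ∧ c * t ^ (-p) ≤ F' t ∧ F t ≤ B * t ^ (q / 2)) :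
    False := by
  obtain ⟨T, hT⟩ := eventually_atTop.1 (hF.and (eventually_gt_atTop 0))
  have hp' : 0 < 1 - p := by linarith
  let G : ℝ → ℝ := fun t => F t - c / (1 - p) * t ^ (1 - p)
  have hG : ∀ t, T ≤ t → HasDerivAt G (F' t - c * t ^ (-p)) t := by
    intro t ht
    have h := (hT t ht).1.1.sub ((Real.hasDerivAt_rpow_const (p := 1 - p)
      (Or.inl (hT t ht).2.ne')).const_mul (c / (1 - p)))
    refine h.congr_deriv ?_
    rw [show 1 - p - 1 = -p by ring]
    field_simp
  have hmono : MonotoneOn G (Set.Ici T) := by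
    apply monotoneOn_of_deriv_nonneg (convex_Ici T)
    · exact fun t ht => (hG t ht).continuousAt.continuousWithinAt
    · rw [interior_Ici]
      exact fun t ht => (hG t (le_of_lt ht)).differentiableAt.differentiableWithinAt
    · rw [interior_Ici]
      intro t ht
      rw [(hG t (le_of_lt ht)).deriv]
      linarith [(hT t (le_of_lt ht)).1.2.1]
  have hc' : 0 < c / (1 - p) := div_pos hc hp'
  obtain ⟨t, h1, h2, h3, h4⟩ := ((skdv_rpow B (q / 2) (1 - p) (c / (1 - p) / 4) hq (by positivity)).and
    ((skdv_rpow (-G T) 0 (1 - p) (c / (1 - p) / 4) hp' (by positivity)).and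
    ((eventually_ge_atTop T).and (eventually_gt_atTop 0)))).exists
  have h5 := hmono (Set.mem_Ici.2 le_rfl) (Set.mem_Ici.2 h3) h3
  have h6 := (hT t h3).1.2.2
  simp only [Real.rpow_zero, mul_one] at h2
  have h7 : G t = F t - c / (1 - p) * t ^ (1 - p) := rfl
  have h8 : 0 < c / (1 - p) * t ^ (1 - p) := mul_pos hc' (Real.rpow_pos_of_pos h4 _)
  linarith

lemma skdv_main (γ : ℝ) (hγ : γ < 0) (v w : ℝ → ℝ → ℝ)
    (hV : ContDiff ℝ (⊤ : ℕ∞) (fun p : ℝ × ℝ => v p.1 p.2))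
    (hw : ∀ t, ContDiff ℝ 1 (w t)) (hw0 : ∀ t x, 0 ≤ w t x)
    (hpde : ∀ t x, deriv (fun s => v s x) t + iteratedDeriv 3 (v t) x + v t x * deriv (v t) x
      = γ * deriv (w t) x)
    (C : ℝ) (hC : ∀ t R : ℝ, 0 ≤ R → ∫ x in (-R)..R, (v t x ^ 2 + w t x) ≤ C)
    (p K : ℝ) (hp : 0 < p) (hp' : p < 2 / 3) (hK : 0 < K) (δ : ℝ) (hδ : 0 < δ)
    (hmass : ∀ᶠ t : ℝ in atTop, δ ≤ ∫ x in {x : ℝ | |x| ≤ K * t ^ p}, (v t x ^ 2 + w t x)) :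
    False := by
  obtain ⟨ψ, φ, φ1, φ2, M, hM, hψ, hφ, hφ1, hφ2, h0, h1, h11, hz, hψp, hψm, hMψ, hM2, hyφ⟩ :=
    skdv_cutoff
  have hψc : Continuous ψ := continuous_iff_continuousAt.2 fun y => (hψ y).continuousAt
  have hφc : Continuous φ := continuous_iff_continuousAt.2 fun y => (hφ y).continuousAt
  have hvc : ∀ t, Continuous (v t) := fun t =>
    hV.continuous.comp (f := fun x : ℝ => (t, x)) (by fun_prop)
  obtain ⟨q, hpq, hq⟩ : ∃ q, p < q ∧ q < min (4 * p) (2 - 2 * p) :=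
    exists_between (lt_min (by linarith) (by linarith))
  have hq1 : q < 4 * p := hq.trans_le (min_le_left _ _)
  have hq2 : q < 2 - 2 * p := hq.trans_le (min_le_right _ _)
  have hq0 : 0 < q := hp.trans hpq
  have hC0 : 0 ≤ C := by simpa using hC 0 0 le_rfl
  let k : ℝ → ℝ := fun s => K⁻¹ * s ^ (-p)
  let m : ℝ → ℝ := fun s => s ^ (-q)
  have hk0 : ∀ s, 0 < s → 0 < k s := fun s hs => by
    have := Real.rpow_pos_of_pos hs (-p)
    positivity
  have hm0 : ∀ s, 0 < s → 0 < m s := fun s hs => Real.rpow_pos_of_pos hs (-q)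
  have hk : ∀ s, 0 < s → HasDerivAt k (-(p / s) * k s) s := by
    intro s hs
    refine ((Real.hasDerivAt_rpow_const (p := -p) (Or.inl hs.ne')).const_mul K⁻¹).congr_deriv ?_
    rw [Real.rpow_sub_one hs.ne']; simp only [k]; ring
  have hm : ∀ s, 0 < s → HasDerivAt m (-(q / s) * m s) s := by
    intro s hs
    refine (Real.hasDerivAt_rpow_const (p := -q) (Or.inl hs.ne')).congr_deriv ?_
    rw [Real.rpow_sub_one hs.ne']; simp only [m]; ring
  have hcont : ∀ (c : ℝ) (h : ℝ → ℝ), (∀ s, 0 < s → ContinuousAt h s) →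
      ContinuousOn (fun s => -(c / s) * h s) (Set.Ioi 0) := by
    intro c h hh s hs
    have : s ≠ 0 := ne_of_gt hs
    exact (((continuousAt_const.div continuousAt_id this).neg).mul (hh s hs)).continuousWithinAt
  let F : ℝ → ℝ := fun s => ∫ x, v s x * (ψ (x * k s) - ψ (x * m s))
  let D : ℝ → ℝ := fun t => ∫ x in (-(3 * t ^ q))..(3 * t ^ q),
    ((v t x ^ 2 / 2 - γ * w t x) * (k t * φ (x * k t) - m t * φ (x * m t))
        + v t x * (k t ^ 3 * φ2 (x * k t) - m t ^ 3 * φ2 (x * m t))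
        + v t x * (x * (-(p / t) * k t) * φ (x * k t) - x * (-(q / t) * m t) * φ (x * m t)))
  set κ := min (1 / 2) (-γ) with hκ
  have hκ0 : 0 < κ := lt_min (by norm_num) (by linarith)
  set c := κ * K⁻¹ * δ with hc
  have hc0 : 0 < c := by positivity
  have hsupp : ∀ R s, 0 < s → 2 < R * k s → 2 < R * m s →
      F s = ∫ x in (-R)..R, v s x * (ψ (x * k s) - ψ (x * m s)) := by
    intro R s hs h2 h3
    refine (intervalIntegral.integral_eq_integral_of_support_subset ?_).symm
    intro x hx
    by_contra hx'
    apply hx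
    have hx2 : x ≤ -R ∨ R < x := by
      by_contra hcon
      push Not at hcon
      exact hx' ⟨hcon.1, hcon.2⟩
    have hks := hk0 s hs
    have hms := hm0 s hs
    rcases hx2 with h | h
    · have e1 : x * k s < -2 := by nlinarith
      have e2 : x * m s < -2 := by nlinarith
      simp only [hψm _ e1, hψm _ e2, sub_self, mul_zero]
    · have e1 : 2 < x * k s := by nlinarith
      have e2 : 2 < x * m s := by nlinarith
      simp only [hψp _ e1, hψp _ e2, sub_self, mul_zero]
  refine skdv_ode F D p q (c / 2) (2 * M * (C + 6)) (by linarith) (by linarith) (by positivity) ?_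
  set B1 := (1 / 2 - γ) * C
  set B2 := M * K⁻¹ ^ 3 * (C + 6)
  set B3 := M * (C + 6)
  set B4 := 2 * (p + q) * (C + 6)
  filter_upwards [hmass, eventually_gt_atTop 0, skdv_rpow K p q 1 hpq one_pos,
    skdv_rpow B1 (-q) (-p) (c / 8) (by linarith) (by positivity),
    skdv_rpow B2 (-(3 * p) + q / 2) (-p) (c / 8) (by linarith) (by positivity),
    skdv_rpow B3 (-(3 * q) + q / 2) (-p) (c / 8) (by linarith) (by positivity),
    skdv_rpow B4 (-1 + q / 2) (-p) (c / 8) (by linarith) (by positivity)]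
    with t hmt ht hKt hB1 hB2 hB3 hB4
  have htq : 0 < t ^ q := Real.rpow_pos_of_pos ht q
  have htp : 0 < t ^ p := Real.rpow_pos_of_pos ht p
  have htq2 : 0 < t ^ (q / 2) := Real.rpow_pos_of_pos ht _
  have hmR : 2 < 3 * t ^ q * m t := by
    have : t ^ q * m t = 1 := by simp only [m]; rw [← Real.rpow_add ht]; simp
    rw [mul_assoc, this]; norm_num
  have hkK : K * t ^ p * k t = 1 := by
    have : t ^ p * t ^ (-p) = 1 := by rw [← Real.rpow_add ht]; simp
    simp only [k]
    calc K * t ^ p * (K⁻¹ * t ^ (-p)) = (K * K⁻¹) * (t ^ p * t ^ (-p)) := by ring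
      _ = 1 := by rw [this, mul_inv_cancel₀ hK.ne', one_mul]
  have hkt := hk0 t ht
  have hkR : 2 < 3 * t ^ q * k t := by
    rw [one_mul] at hKt
    have := mul_le_mul_of_nonneg_right hKt hkt.le
    linarith
  have hsR : t ^ (q / 2) * C + 2 * (3 * t ^ q) / t ^ (q / 2) = (C + 6) * t ^ (q / 2) := by
    have : t ^ q = t ^ (q / 2) * t ^ (q / 2) := by rw [← Real.rpow_add ht]; congr 1; ring
    rw [this]; field_simp; ring
  refine ⟨?_, ?_, ?_⟩
  · have h := skdv_key γ v w hV hw hpde ψ φ φ1 φ2 hψ hφ hφ1 hφ2 hz hψp hψm k m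
      (fun s => -(p / s) * k s) (fun s => -(q / s) * m s) hk hm
      (hcont p k fun s hs => (hk s hs).continuousAt)
      (hcont q m fun s hs => (hm s hs).continuousAt) (3 * t ^ q) t ht hkR hmR
    refine h.congr_of_eventuallyEq ?_
    have c1 : ∀ᶠ s in nhds t, 2 < 3 * t ^ q * k s :=
      ((hk t ht).continuousAt.const_mul (3 * t ^ q)).eventually_const_lt hkR
    have c2 : ∀ᶠ s in nhds t, 2 < 3 * t ^ q * m s :=
      ((hm t ht).continuousAt.const_mul (3 * t ^ q)).eventually_const_lt hmR
    filter_upwards [lt_mem_nhds ht, c1, c2] with s hs hs1 hs2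
    exact hsupp _ s hs hs1 hs2
  · have h := skdv_lower γ hγ (v t) (w t) (hvc t) (hw t).continuous (hw0 t) φ φ2 hφc hφ2 M h0 h1
      h11 hM2 hyφ (k t) (m t) t p q (K * t ^ p) (3 * t ^ q) C (t ^ (q / 2)) δ hkt (hm0 t ht) ht hp
      hq0 (by positivity) (by linarith) hkK.le htq2 hM (hC t _ (by positivity)) hmt
    refine le_trans ?_ h
    rw [hsR]
    have r1 : κ * k t * δ = c * t ^ (-p) := by simp only [k, hc]; ring
    have r2 : (1 / 2 - γ) * m t * C = B1 * t ^ (-q) := by simp only [m, B1]; ring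
    have x3 : ∀ e : ℝ, (t ^ (-e)) ^ 3 = t ^ (-(3 * e)) := by
      intro e
      rw [← Real.rpow_natCast, ← Real.rpow_mul ht.le]; congr 1; push_cast; ring
    have r3 : (M * (k t ^ 3 + m t ^ 3) + 2 * (p + q) / t) * ((C + 6) * t ^ (q / 2))
        = B2 * t ^ (-(3 * p) + q / 2) + B3 * t ^ (-(3 * q) + q / 2) + B4 * t ^ (-1 + q / 2) := by
      rw [Real.rpow_add ht, Real.rpow_add ht, Real.rpow_add ht, Real.rpow_neg_one, ← x3 p, ← x3 q]
      simp only [k, m, B2, B3, B4]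
      ring
    rw [r1, r2, r3]
    linarith
  · rw [hsupp _ t ht hkR hmR]
    have e := skdv_abs_int (v t) (w t) (hvc t) (hw t).continuous (hw0 t) (3 * t ^ q) C (t ^ (q / 2))
      (2 * M) (by positivity) htq2 (by positivity) (hC t _ (by positivity))
    rw [hsR] at e
    have hvt := hvc t
    calc _ ≤ ∫ x in (-(3 * t ^ q))..(3 * t ^ q), |v t x| * (2 * M) := by
          apply intervalIntegral.integral_mono_on (by linarith)
          · apply Continuous.intervalIntegrable; fun_prop
          · apply Continuous.intervalIntegrable; fun_prop
          · intro x _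
            refine (le_abs_self _).trans ?_
            rw [abs_mul]
            refine mul_le_mul_of_nonneg_left ?_ (abs_nonneg _)
            refine (abs_sub _ _).trans ?_
            linarith [hMψ (x * k t), hMψ (x * m t)]
      _ ≤ _ := by linarith

/-- Decay of the `L²` mass of `(u,v)` on the growing regions `|x| ≤ K t^{p₁}`,
    `0 < p₁ < 2/3`, along a sequence of times. -/
theorem skdv_L2_decay (α β γ : ℝ) (hα : α < 0) (hγ : γ < 0)
    (u : ℝ → ℝ → ℂ) (v : ℝ → ℝ → ℝ) (hsol : IsSKdVSolution α β γ u v)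
    (p₁ K : ℝ) (hp₁ : 0 < p₁) (hp₁' : p₁ < 2 / 3) (hK : 0 < K) :
    liminf (fun t : ℝ =>
        ∫ x in {x : ℝ | |x| ≤ K * t ^ p₁}, ((v t x) ^ 2 + ‖u t x‖ ^ 2)) atTop = 0 ∧
    liminf (fun t : ℝ =>
        ∫ x in {x : ℝ | |x| ≤ K * t ^ p₁}, (v t x) ^ 2) atTop = 0 ∧
    liminf (fun t : ℝ =>
        ∫ x in {x : ℝ | |x| ≤ K * t ^ p₁}, ‖u t x‖ ^ 2) atTop = 0 := by
  obtain ⟨hU, hV, hSu, hSv, -, hpde, C, hC⟩ := hsol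
  have hus : ∀ t, ContDiff ℝ 1 (fun x => ‖u t x‖ ^ 2) := fun t => by
    have h : ContDiff ℝ (⊤ : ℕ∞) (u t) := hU.comp (f := fun x : ℝ => (t, x)) (by fun_prop)
    exact (h.norm_sq ℝ).of_le (by simp)
  have hui : ∀ t, Integrable (fun x => ‖u t x‖ ^ 2) := fun t => by
    obtain ⟨f, hf⟩ := hSu t
    have := (f.memLp 2 (volume : Measure ℝ)).integrable_norm_pow (by norm_num)
    simpa [hf] using this
  have hvi : ∀ t, Integrable (fun x => v t x ^ 2) := fun t => by
    obtain ⟨f, hf⟩ := hSv t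
    have := (f.memLp 2 (volume : Measure ℝ)).integrable_norm_pow (by norm_num)
    simpa [hf] using this
  have hsi : ∀ t, Integrable (fun x => v t x ^ 2 + ‖u t x‖ ^ 2) := fun t => (hvi t).add (hui t)
  have hCR : ∀ t R : ℝ, 0 ≤ R → ∫ x in (-R)..R, (v t x ^ 2 + ‖u t x‖ ^ 2) ≤ C := by
    intro t R hR
    rw [intervalIntegral.integral_of_le (by linarith)]
    refine (setIntegral_le_integral (hsi t) (Eventually.of_forall fun x => by positivity)).trans ?_
    rw [integral_add (hvi t) (hui t)]
    have e1 : 0 ≤ ∫ x : ℝ, ‖deriv (u t) x‖ ^ 2 := integral_nonneg fun x => by positivity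
    have e2 : 0 ≤ ∫ x : ℝ, (deriv (v t) x) ^ 2 := integral_nonneg fun x => by positivity
    linarith [hC t]
  have hfreq : ∀ δ > 0, ∃ᶠ t : ℝ in atTop,
      ∫ x in {x : ℝ | |x| ≤ K * t ^ p₁}, ((v t x) ^ 2 + ‖u t x‖ ^ 2) ≤ δ := by
    intro δ hδ hcon
    refine skdv_main γ hγ v (fun t x => ‖u t x‖ ^ 2) hV hus (fun t x => by positivity) hpde C hCR
      p₁ K hp₁ hp₁' hK δ hδ ?_
    filter_upwards [hcon] with t ht
    exact (not_le.1 ht).le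
  refine ⟨skdv_liminf_zero _ (fun t => integral_nonneg fun x => by positivity) hfreq,
    skdv_liminf_zero _ (fun t => integral_nonneg fun x => by positivity) fun δ hδ =>
      (hfreq δ hδ).mono fun t ht => le_trans ?_ ht,
    skdv_liminf_zero _ (fun t => integral_nonneg fun x => by positivity) fun δ hδ =>
      (hfreq δ hδ).mono fun t ht => le_trans ?_ ht⟩
  · exact integral_mono (hvi t).integrableOn (hsi t).integrableOn fun x =>
      le_add_of_nonneg_right (by positivity)
  · exact integral_mono (hui t).integrableOn (hsi t).integrableOn fun x =>
      le_add_of_nonneg_left (by positivity)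
end

section
/- Let α < 0, γ < 0 and β > 0, and let (u,v) be a regular solution of the Schrödinger–Korteweg–de Vries system with these parameters. Then for every exponent p₁ with 0 < p₁ < 2/3 and every constant K > 0, liminf_{t→∞} ∫_{{x : |x| ≤ K·t^{p₁}}} ( (∂ₓv(t,x))² + |∂ₓu(t,x)|² ) dx = 0 and also liminf_{t→∞} ∫_{{x : |x| ≤ K·t^{p₁}}} |u(t,x)|⁴ dx = 0. -/
open MeasureTheory Filter

namespace SKdV
theorem exists_weight : ∃ (A a a1 a2 : ℝ → ℝ) (B : ℝ), 
    (∀ x, HasDerivAt A (a x) x) ∧ (∀ x, HasDerivAt a (a1 x) x) ∧ (∀ x, HasDerivAt a1 (a2 x) x) ∧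
    Continuous a2 ∧ (∀ x, 0 ≤ a x) ∧ (∀ x, a x ≤ 1) ∧ (∀ x, |x| ≤ 1 → a x = 1) ∧
    (∀ x, 2 < |x| → a x = 0) ∧ (∀ x, 2 < |x| → a1 x = 0) ∧ (∀ x, 2 < |x| → a2 x = 0) ∧
    0 ≤ B ∧ (∀ x, |a2 x| ≤ B) ∧ (∀ x, |A x| ≤ 2) ∧ (∀ x y, 2 ≤ x → 2 ≤ y → A x = A y) ∧
    (∀ x y, x ≤ -2 → y ≤ -2 → A x = A y) := by
  let b : ContDiffBump (0:ℝ) := ⟨1, 2, by norm_num, by norm_num⟩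
  have hb : ContDiff ℝ (⊤:ℕ∞) (b : ℝ → ℝ) := b.contDiff
  have hb1 : ContDiff ℝ (⊤:ℕ∞) (deriv (b : ℝ → ℝ)) := (contDiff_infty_iff_deriv.1 hb).2
  have hb2 : ContDiff ℝ (⊤:ℕ∞) (deriv (deriv (b : ℝ → ℝ))) := (contDiff_infty_iff_deriv.1 hb1).2
  have hz : ∀ x : ℝ, 2 ≤ |x| → b x = 0 := fun x hx => b.zero_of_le_dist (by simpa using hx)
  have hev : ∀ x : ℝ, 2 < |x| → ∀ᶠ y in nhds x, 2 < |y| := fun x hx =>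
    (continuous_abs.tendsto x).eventually (lt_mem_nhds hx)
  have hz1 : ∀ x : ℝ, 2 < |x| → deriv b x = 0 := fun x hx => by
    have : (b : ℝ → ℝ) =ᶠ[nhds x] fun _ => 0 := by
      filter_upwards [hev x hx] with y hy using hz y hy.le
    rw [this.deriv_eq]; simp
  have hz2 : ∀ x : ℝ, 2 < |x| → deriv (deriv b) x = 0 := fun x hx => by
    have : deriv (b : ℝ → ℝ) =ᶠ[nhds x] fun _ => 0 := by
      filter_upwards [hev x hx] with y hy using hz1 y hy
    rw [this.deriv_eq]; simp
  have hc2 : HasCompactSupport (deriv (deriv (b : ℝ → ℝ))) := by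
    refine HasCompactSupport.intro (isCompact_closedBall (0:ℝ) 2) fun x hx => hz2 x ?_
    simpa using hx
  obtain ⟨B, hB⟩ := hb2.continuous.bounded_above_of_compact_support hc2
  have hA : ∀ x, HasDerivAt (fun x => ∫ s in (0:ℝ)..x, b s) (b x) x := fun x =>
    intervalIntegral.integral_hasDerivAt_right (hb.continuous.intervalIntegrable _ _)
      (hb.continuous.stronglyMeasurableAtFilter _ _) hb.continuous.continuousAt
  have hone : ∀ x y : ℝ, |∫ s in x..y, b s| ≤ |y - x| := fun x y => by
    have := intervalIntegral.norm_integral_le_of_norm_le_const (a := x) (b := y) (C := 1) (f := b)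
      (fun s _ => by rw [Real.norm_eq_abs, abs_of_nonneg b.nonneg]; exact b.le_one)
    simpa using this
  have hzz : ∀ x y : ℝ, (2 ≤ x ∧ 2 ≤ y) ∨ (x ≤ -2 ∧ y ≤ -2) → ∫ s in x..y, b s = 0 := fun x y h => by
    rw [intervalIntegral.integral_congr (g := fun _ => 0)]
    · simp
    · intro s hs
      apply hz
      rw [Set.mem_uIcc] at hs
      rcases h with ⟨h1, h2⟩ | ⟨h1, h2⟩
      · rw [le_abs]; left; rcases hs with ⟨h3, h4⟩ | ⟨h3, h4⟩ <;> linarith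
      · rw [le_abs]; right; rcases hs with ⟨h3, h4⟩ | ⟨h3, h4⟩ <;> linarith
  have hadd : ∀ x y : ℝ, (∫ s in (0:ℝ)..x, b s) = (∫ s in (0:ℝ)..y, b s) + ∫ s in y..x, b s := fun x y =>
    (intervalIntegral.integral_add_adjacent_intervals (hb.continuous.intervalIntegrable _ _)
      (hb.continuous.intervalIntegrable _ _)).symm
  refine ⟨fun x => ∫ s in (0:ℝ)..x, b s, b, deriv b, deriv (deriv b), B, hA,
    fun x => (hb.differentiable (by simp) x).hasDerivAt, 
    fun x => (hb1.differentiable (by simp) x).hasDerivAt, hb2.continuous, fun x => b.nonneg,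
    fun x => b.le_one, fun x hx => b.one_of_mem_closedBall (by simpa using hx), 
    fun x hx => hz x hx.le, hz1, hz2, (norm_nonneg _).trans (hB 0), hB, ?_, ?_, ?_⟩
  · intro x
    by_cases h : |x| ≤ 2
    · exact (hone 0 x).trans (by simpa using h)
    · push Not at h
      rcases lt_abs.1 h with h | h
      · show |∫ s in (0:ℝ)..x, b s| ≤ 2
        rw [hadd x 2, hzz _ _ (Or.inl ⟨le_rfl, h.le⟩), add_zero]
        exact (hone 0 2).trans (by norm_num)
      · show |∫ s in (0:ℝ)..x, b s| ≤ 2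
        rw [hadd x (-2), hzz _ _ (Or.inr ⟨le_rfl, by linarith⟩), add_zero]
        exact (hone 0 (-2)).trans (by norm_num)
  · intro x y hx hy
    show (∫ s in (0:ℝ)..x, b s) = ∫ s in (0:ℝ)..y, b s
    rw [hadd x y, hzz _ _ (Or.inl ⟨hy, hx⟩), add_zero]
  · intro x y hx hy
    show (∫ s in (0:ℝ)..x, b s) = ∫ s in (0:ℝ)..y, b s
    rw [hadd x y, hzz _ _ (Or.inr ⟨hy, hx⟩), add_zero]

/-- partial derivatives -/
noncomputable def dt (F : ℝ × ℝ → ℝ) (p : ℝ × ℝ) : ℝ := fderiv ℝ F p (1, 0)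
noncomputable def dx (F : ℝ × ℝ → ℝ) (p : ℝ × ℝ) : ℝ := fderiv ℝ F p (0, 1)

abbrev Sm (F : ℝ × ℝ → ℝ) : Prop := ContDiff ℝ (⊤ : ℕ∞) F

theorem Sm.dif {F : ℝ × ℝ → ℝ} (h : Sm F) (p) : DifferentiableAt ℝ F p :=
  h.differentiable (by simp) p

theorem Sm.dt {F : ℝ × ℝ → ℝ} (h : Sm F) : Sm (dt F) := by
  have : ContDiff ℝ (⊤ : ℕ∞) (fderiv ℝ F) := h.fderiv_right (by simp)
  exact this.clm_apply contDiff_const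

theorem Sm.dx {F : ℝ × ℝ → ℝ} (h : Sm F) : Sm (dx F) := by
  have : ContDiff ℝ (⊤ : ℕ∞) (fderiv ℝ F) := h.fderiv_right (by simp)
  exact this.clm_apply contDiff_const

theorem hasDerivAt_dx {F : ℝ × ℝ → ℝ} (h : Sm F) (t x : ℝ) :
    HasDerivAt (fun y => F (t, y)) (dx F (t, x)) x := by
  have h1 := (h.dif (t, x)).hasFDerivAt
  exact h1.comp_hasDerivAt x ((hasDerivAt_const x t).prodMk (hasDerivAt_id x))

theorem hasDerivAt_dt {F : ℝ × ℝ → ℝ} (h : Sm F) (t x : ℝ) :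
    HasDerivAt (fun s => F (s, x)) (dt F (t, x)) t := by
  have h1 := (h.dif (t, x)).hasFDerivAt
  exact h1.comp_hasDerivAt t ((hasDerivAt_id t).prodMk (hasDerivAt_const t x))

theorem dt_dx {F : ℝ × ℝ → ℝ} (h : Sm F) (p) : dt (dx F) p = dx (dt F) p := by
  have hs : IsSymmSndFDerivAt ℝ F p := 
    h.contDiffAt.isSymmSndFDerivAt (by simp only [minSmoothness_of_isRCLikeNormedField]; exact WithTop.coe_le_coe.2 le_top)
  have h2 : ContDiff ℝ (⊤ : ℕ∞) (fderiv ℝ F) := h.fderiv_right (by simp)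
  have h3 : ∀ q : ℝ × ℝ, ∀ w : ℝ × ℝ, fderiv ℝ (fun p => fderiv ℝ F p q) p w = fderiv ℝ (fderiv ℝ F) p w q := by
    intro q w
    rw [fderiv_clm_apply (h2.differentiable (by simp) p) (by fun_prop)]
    simp
  show fderiv ℝ (fun p => fderiv ℝ F p (0, 1)) p (1, 0) = fderiv ℝ (fun p => fderiv ℝ F p (1, 0)) p (0, 1)
  rw [h3, h3, hs.eq]

theorem ibp {ψ ψ' G G' : ℝ → ℝ} {N : ℝ} (h1 : ∀ x, HasDerivAt ψ (ψ' x) x) (hc : Continuous ψ')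
    (h2 : ∀ x, HasDerivAt G (G' x) x) (hc' : Continuous G')
    (hz : ∀ x, N < |x| → ψ x = 0) (hz' : ∀ x, N < |x| → ψ' x = 0) :
    ∫ x, ψ x * G' x = - ∫ x, ψ' x * G x := by
  have c1 : Continuous ψ := continuous_iff_continuousAt.2 fun x => (h1 x).continuousAt
  have c2 : Continuous G := continuous_iff_continuousAt.2 fun x => (h2 x).continuousAt
  have k : ∀ φ H : ℝ → ℝ, Continuous φ → Continuous H → (∀ x, N < |x| → φ x = 0) → 
      Integrable (fun x => φ x * H x) := by
    intro φ H hφ hH hz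
    refine (hφ.mul hH).integrable_of_hasCompactSupport ?_
    refine HasCompactSupport.intro (isCompact_closedBall (0:ℝ) N) fun x hx => ?_
    have : N < |x| := by simpa using hx
    simp [hz x this]
  exact integral_mul_deriv_eq_deriv_mul_of_integrable (fun x _ => h1 x) (fun x _ => h2 x) (k _ _ c1 hc' hz) (k _ _ hc c2 hz')
    (k _ _ c1 c2 hz)

theorem hasDerivAt_int {ψ : ℝ → ℝ} {D : ℝ × ℝ → ℝ} {N : ℝ} (hψ : Continuous ψ) (hD : Sm D)
    (hz : ∀ x, N < |x| → ψ x = 0) (t : ℝ) :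
    HasDerivAt (fun s => ∫ x, ψ x * D (s, x)) (∫ x, ψ x * dt D (t, x)) t := by
  have hcs : HasCompactSupport ψ := 
    HasCompactSupport.intro (isCompact_closedBall (0:ℝ) N) fun x hx => hz x (by simpa using hx)
  obtain ⟨C, hC⟩ := ((isCompact_closedBall t 1).prod (isCompact_closedBall (0:ℝ) N)).exists_bound_of_continuousOn
    (f := dt D) hD.dt.continuous.continuousOn
  have hDc := hD.continuous
  have hDc' := hD.dt.continuous
  have := hasDerivAt_integral_of_dominated_loc_of_deriv_le (μ := volume) (𝕜 := ℝ)
    (F := fun s x => ψ x * D (s, x)) (F' := fun s x => ψ x * dt D (s, x)) (x₀ := t)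
    (s := Metric.ball t 1) (bound := fun x => |ψ x| * C) (Metric.ball_mem_nhds t one_pos)
    (Eventually.of_forall fun s => by
      apply Continuous.aestronglyMeasurable; fun_prop)
    (by
      apply Continuous.integrable_of_hasCompactSupport (by fun_prop)
      exact hcs.mul_right)
    (by apply Continuous.aestronglyMeasurable; fun_prop)
    (by
      refine Eventually.of_forall fun x s hs => ?_
      rw [norm_mul, Real.norm_eq_abs]
      by_cases hx : N < |x|
      · simp [hz x hx]
      · exact mul_le_mul_of_nonneg_left (hC (s, x) ⟨Metric.ball_subset_closedBall hs, by simpa using hx⟩) (abs_nonneg _))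
    (by
      apply Continuous.integrable_of_hasCompactSupport (by fun_prop)
      exact (hcs.norm).mul_right)
    (by
      refine Eventually.of_forall fun x s hs => ?_
      exact (hasDerivAt_dt hD s x).const_mul _)
  exact this.2

theorem exists_R (p₁ K : ℝ) (hp₁ : 0 < p₁) (hp₁' : p₁ < 2 / 3) (hK : 0 < K) (T0 δ : ℝ) (hδ : 0 < δ) :
    ∃ R : ℝ, 1 ≤ R ∧ T0 ≤ R ^ 3 ∧ 1 ≤ K * (2 * R ^ 3) ^ p₁ ∧ K * (2 * R ^ 3) ^ p₁ ≤ R ^ 2 ∧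
      K * (2 * R ^ 3) ^ p₁ / R ^ 2 ≤ δ ∧ 1 / (K * (2 * R ^ 3) ^ p₁) ≤ δ := by
  have h3 : Tendsto (fun R : ℝ => R ^ 3) atTop atTop := tendsto_pow_atTop (by norm_num)
  have h1 : Tendsto (fun R : ℝ => K * (2 * R ^ 3) ^ p₁) atTop atTop := 
    ((tendsto_rpow_atTop hp₁).comp (h3.const_mul_atTop two_pos)).const_mul_atTop hK
  have h2 : Tendsto (fun R : ℝ => K * (2 * R ^ 3) ^ p₁ / R ^ 2) atTop (nhds 0) := by
    have h4 : Tendsto (fun R : ℝ => K * 2 ^ p₁ * R ^ (-(2 - 3 * p₁))) atTop (nhds (K * 2 ^ p₁ * 0)) :=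
      (tendsto_rpow_neg_atTop (by linarith)).const_mul _
    rw [mul_zero] at h4
    refine h4.congr' ?_
    filter_upwards [eventually_gt_atTop 0] with R hR
    rw [Real.mul_rpow two_pos.le (by positivity), ← Real.rpow_natCast, ← Real.rpow_natCast, ← Real.rpow_mul hR.le,
      mul_div_assoc, mul_div_assoc, ← Real.rpow_sub hR, mul_assoc]
    congr 3
    push_cast; ring
  have h5 := h1.inv_tendsto_atTop
  obtain ⟨R, e1, e2, e3, e4, e5, e6⟩ := ((eventually_ge_atTop 1).and ((h3.eventually_ge_atTop T0).and
    ((h1.eventually_ge_atTop 1).and ((h2.eventually_le_const (show (0:ℝ) < 1 by norm_num)).and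
      ((h2.eventually_le_const hδ).and (h5.eventually_le_const hδ)))))).exists
  refine ⟨R, e1, e2, e3, ?_, e5, by simpa using e6⟩
  rwa [div_le_one (by positivity)] at e4

theorem core (D W Q e : ℝ × ℝ → ℝ) (hD : Sm D) (hW : Sm W) (hQ : Sm Q) (he : Continuous e)
    (heq : ∀ p, dt D p = - dx W p + dx (dx (dx Q)) p) (c C : ℝ) (hc : 0 < c) (hC : 0 ≤ C)
    (he0 : ∀ p, 0 ≤ e p)
    (hWl : ∀ p, c * e p ≤ W p) (hWu : ∀ p, W p ≤ C * e p) (hQb : ∀ p, |Q p| ≤ C)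
    (hDb : ∀ p, ∀ R : ℝ, 1 ≤ R → |D p| ≤ C * (R * e p + 1 / R))
    (hei : ∀ t, Integrable (fun x => e (t, x))) (heb : ∀ t, ∫ x, e (t, x) ≤ C)
    (p₁ K : ℝ) (hp₁ : 0 < p₁) (hp₁' : p₁ < 2 / 3) (hK : 0 < K) (T0 ε : ℝ) (hε : 0 < ε) :
    ∃ t, T0 ≤ t ∧ ∫ x in {x : ℝ | |x| ≤ K * t ^ p₁}, e (t, x) ≤ ε := by
  obtain ⟨A, a, a1, a2, B, hA, ha, ha1, ca2, a0, aone, aeq, az, a1z, a2z, hB, a2B, AB, Ap, Am⟩ :=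
    exists_weight
  have ca1 : Continuous a1 := continuous_iff_continuousAt.2 fun x => (ha1 x).continuousAt
  have ca : Continuous a := continuous_iff_continuousAt.2 fun x => (ha x).continuousAt
  have cA : Continuous A := continuous_iff_continuousAt.2 fun x => (hA x).continuousAt
  obtain ⟨R, hR, hRT, hl, hlm, hs1, hs2⟩ := exists_R p₁ K hp₁ hp₁' hK T0
    (c * ε / (2 * (8 * C * (C + 4) + C ^ 2 + 8 * C * B + 1))) (by positivity)
  set l := K * (2 * R ^ 3) ^ p₁ with hldef
  set m := R ^ 2 with hm
  have hl0 : 0 < l := by linarith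
  have hm0 : 0 < m := by positivity
  by_contra! hcon
  -- weights
  let ψ : ℝ → ℝ := fun x => A (x / l) - A (x / m)
  let ψ1 : ℝ → ℝ := fun x => a (x / l) / l - a (x / m) / m
  let ψ2 : ℝ → ℝ := fun x => a1 (x / l) / l / l - a1 (x / m) / m / m
  let ψ3 : ℝ → ℝ := fun x => a2 (x / l) / l / l / l - a2 (x / m) / m / m / m
  have chain : ∀ (f f' : ℝ → ℝ) (r : ℝ), (∀ x, HasDerivAt f (f' x) x) → ∀ x, 
      HasDerivAt (fun x => f (x / r)) (f' (x / r) / r) x := by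
    intro f f' r h x
    have := (h (x / r)).comp x ((hasDerivAt_id x).div_const r)
    have h2 : f' (x / r) * (1 / r) = f' (x / r) / r := by ring
    rw [← h2]
    exact this
  have d0 : ∀ x, HasDerivAt ψ (ψ1 x) x := fun x => (chain A a l hA x).sub (chain A a m hA x)
  have d1 : ∀ x, HasDerivAt ψ1 (ψ2 x) x := fun x => 
    ((chain a a1 l ha x).div_const l).sub ((chain a a1 m ha x).div_const m)
  have d2 : ∀ x, HasDerivAt ψ2 (ψ3 x) x := fun x => 
    (((chain a1 a2 l ha1 x).div_const l).div_const l).sub (((chain a1 a2 m ha1 x).div_const m).div_const m)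
  have cψ : Continuous ψ := by fun_prop
  have cψ1 : Continuous ψ1 := by fun_prop
  have cψ2 : Continuous ψ2 := by fun_prop
  have cψ3 : Continuous ψ3 := by fun_prop
  have far : ∀ r x : ℝ, 0 < r → 2 * r < |x| → 2 < |x / r| := by
    intro r x hr hx
    rw [abs_div, abs_of_pos hr, lt_div_iff₀ hr]; exact hx
  have z0 : ∀ x, 2 * m < |x| → ψ x = 0 := by
    intro x hx
    have f1 := far m x hm0 hx
    have f2 := far l x hl0 (by linarith)
    simp only [ψ]
    rcases lt_or_ge x 0 with h | h
    · rw [Am (x / l) (x / m), sub_self]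
      · rw [abs_of_neg (div_neg_of_neg_of_pos h hl0)] at f2; linarith
      · rw [abs_of_neg (div_neg_of_neg_of_pos h hm0)] at f1; linarith
    · rw [Ap (x / l) (x / m), sub_self]
      · rw [abs_of_nonneg (by positivity)] at f2; linarith
      · rw [abs_of_nonneg (by positivity)] at f1; linarith
  have z1 : ∀ x, 2 * m < |x| → ψ1 x = 0 := by
    intro x hx
    simp only [ψ1, az _ (far m x hm0 hx), az _ (far l x hl0 (by linarith))]; simp
  have z2 : ∀ x, 2 * m < |x| → ψ2 x = 0 := by
    intro x hx
    simp only [ψ2, a1z _ (far m x hm0 hx), a1z _ (far l x hl0 (by linarith))]; simp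
  have z3 : ∀ x, 2 * m < |x| → ψ3 x = 0 := by
    intro x hx
    simp only [ψ3, a2z _ (far m x hm0 hx), a2z _ (far l x hl0 (by linarith))]; simp
  -- integrability helper
  have kint : ∀ (φ H : ℝ → ℝ) (N : ℝ), Continuous φ → Continuous H → (∀ x, N < |x| → φ x = 0) → 
      Integrable (fun x => φ x * H x) := by
    intro φ H N hφ hH hz
    refine (hφ.mul hH).integrable_of_hasCompactSupport ?_
    refine HasCompactSupport.intro (isCompact_closedBall (0:ℝ) N) fun x hx => ?_
    have : N < |x| := by simpa using hx
    simp [hz x this]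
  have sl : ∀ (F : ℝ × ℝ → ℝ) (t : ℝ), Continuous F → Continuous (fun x => F (t, x)) := 
    fun F t h => by fun_prop
  -- the derivative
  have hder : ∀ t, ∫ x, ψ x * dt D (t, x) = (∫ x, ψ1 x * W (t, x)) - ∫ x, ψ3 x * Q (t, x) := by
    intro t
    have i1 : ∫ x, ψ x * dx W (t, x) = - ∫ x, ψ1 x * W (t, x) :=
      ibp d0 cψ1 (fun x => hasDerivAt_dx hW t x) (sl _ t hW.dx.continuous) z0 z1
    have i2 : ∫ x, ψ x * dx (dx (dx Q)) (t, x) = - ∫ x, ψ1 x * dx (dx Q) (t, x) :=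
      ibp d0 cψ1 (fun x => hasDerivAt_dx hQ.dx.dx t x) (sl _ t hQ.dx.dx.dx.continuous) z0 z1
    have i3 : ∫ x, ψ1 x * dx (dx Q) (t, x) = - ∫ x, ψ2 x * (dx Q) (t, x) :=
      ibp d1 cψ2 (fun x => hasDerivAt_dx hQ.dx t x) (sl _ t hQ.dx.dx.continuous) z1 z2
    have i4 : ∫ x, ψ2 x * dx Q (t, x) = - ∫ x, ψ3 x * Q (t, x) :=
      ibp d2 cψ3 (fun x => hasDerivAt_dx hQ t x) (sl _ t hQ.dx.continuous) z2 z3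
    have : ∀ x, ψ x * dt D (t, x) = ψ x * dx (dx (dx Q)) (t, x) - ψ x * dx W (t, x) := by
      intro x; rw [heq]; ring
    simp_rw [this]
    rw [integral_sub (kint _ _ _ cψ (sl _ t hQ.dx.dx.dx.continuous) z0)
      (kint _ _ _ cψ (sl _ t hW.dx.continuous) z0), i1, i2, i3, i4]
    ring
  have hF : ∀ t, HasDerivAt (fun s => ∫ x, ψ x * D (s, x)) (∫ x, ψ x * dt D (t, x)) t :=
    fun t => hasDerivAt_int cψ hD z0 t
  have hW0 : ∀ p, 0 ≤ W p := fun p => (mul_nonneg hc.le (he0 p)).trans (hWl p)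
  -- lower bound for derivative
  have volI : ∀ r : ℝ, 0 < r → ∫ x, (Set.Icc (-(2 * r)) (2 * r)).indicator (fun _ => (1:ℝ)) x = 4 * r := by
    intro r hr
    rw [integral_indicator measurableSet_Icc]
    simp [Measure.real]
    rw [ENNReal.toReal_ofReal (by linarith)]; ring
  have intI : ∀ r : ℝ, Integrable ((Set.Icc (-(2 * r)) (2 * r)).indicator (fun _ => (1:ℝ))) := by
    intro r
    rw [integrable_indicator_iff measurableSet_Icc]
    exact integrableOn_const (by simp)
  have q3 : ∀ t, |∫ x, ψ3 x * Q (t, x)| ≤ 8 * C * B / l ^ 2 := by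
    intro t
    have bd : ∀ (r x : ℝ), 0 < r → |a2 (x / r) / r / r / r| ≤ 
        B / r ^ 3 * (Set.Icc (-(2 * r)) (2 * r)).indicator (fun _ => (1:ℝ)) x := by
      intro r x hr
      by_cases hx : 2 * r < |x|
      · rw [a2z _ (far r x hr hx)]; simp
        exact mul_nonneg (by positivity) (Set.indicator_nonneg (fun _ _ => zero_le_one) _)
      · rw [Set.indicator_of_mem (by rw [Set.mem_Icc, ← abs_le]; linarith)]
        rw [abs_div, abs_div, abs_div, abs_of_pos hr, div_div, div_div, mul_one]
        rw [show r * (r * r) = r ^ 3 by ring]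
        exact div_le_div_of_nonneg_right (a2B _) (by positivity)
    have h1 : |∫ x, ψ3 x * Q (t, x)| ≤ ∫ x, C * (B / l ^ 3 * (Set.Icc (-(2 * l)) (2 * l)).indicator (fun _ => (1:ℝ)) x + 
        B / m ^ 3 * (Set.Icc (-(2 * m)) (2 * m)).indicator (fun _ => (1:ℝ)) x) := by
      rw [← Real.norm_eq_abs]
      refine norm_integral_le_of_norm_le ((((intI l).const_mul _).add ((intI m).const_mul _)).const_mul _)
        (Eventually.of_forall fun x => ?_)
      rw [norm_mul, mul_comm, Real.norm_eq_abs, Real.norm_eq_abs]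
      refine mul_le_mul (hQb _) ?_ (abs_nonneg _) hC
      exact (abs_sub _ _).trans (add_le_add (bd l x hl0) (bd m x hm0))
    rw [integral_const_mul, integral_add ((intI l).const_mul _) ((intI m).const_mul _), integral_const_mul, integral_const_mul,
      volI l hl0, volI m hm0] at h1
    refine h1.trans ?_
    have e1 : B / l ^ 3 * (4 * l) = 4 * B / l ^ 2 := by field_simp
    have e2 : B / m ^ 3 * (4 * m) = 4 * B / m ^ 2 := by field_simp
    have e3 : 4 * B / m ^ 2 ≤ 4 * B / l ^ 2 := by gcongr
    rw [e1, e2]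
    calc C * (4 * B / l ^ 2 + 4 * B / m ^ 2) ≤ C * (4 * B / l ^ 2 + 4 * B / l ^ 2) := by gcongr
      _ = _ := by ring
  have w1 : ∀ t ∈ Set.Icc (R ^ 3) (2 * R ^ 3), c * ε / l - C ^ 2 / m ≤ ∫ x, ψ1 x * W (t, x) := by
    intro t ht
    have ct : Continuous (fun x => W (t, x)) := sl _ t hW.continuous
    have j1 : Integrable (fun x => a (x / l) / l * W (t, x)) := 
      kint (fun x => a (x / l) / l) _ (2 * l) (by fun_prop) ct (fun x hx => by simp [az _ (far l x hl0 hx)])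
    have j2 : Integrable (fun x => a (x / m) / m * W (t, x)) := 
      kint (fun x => a (x / m) / m) _ (2 * m) (by fun_prop) ct (fun x hx => by simp [az _ (far m x hm0 hx)])
    have : ∀ x, ψ1 x * W (t, x) = a (x / l) / l * W (t, x) - a (x / m) / m * W (t, x) := by
      intro x; simp only [ψ1]; ring
    simp_rw [this]
    rw [integral_sub j1 j2]
    have k2 : ∫ x, a (x / m) / m * W (t, x) ≤ C ^ 2 / m := by
      calc ∫ x, a (x / m) / m * W (t, x) ≤ ∫ x, C / m * e (t, x) := by
            refine integral_mono j2 ((hei t).const_mul _) fun x => ?_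
            show a (x / m) / m * W (t, x) ≤ C / m * e (t, x)
            calc a (x / m) / m * W (t, x) ≤ 1 / m * (C * e (t, x)) := by
                  refine mul_le_mul ?_ (hWu _) (hW0 _) (by positivity)
                  exact div_le_div_of_nonneg_right (aone _) hm0.le
              _ = _ := by ring
        _ = C / m * ∫ x, e (t, x) := integral_const_mul _ _
        _ ≤ C / m * C := by gcongr; exact heb t
        _ = _ := by ring
    have tpos : 0 ≤ t := le_trans (by positivity) ht.1
    have k1 : c * ε / l ≤ ∫ x, a (x / l) / l * W (t, x) := by
      have hms : MeasurableSet {x : ℝ | |x| ≤ K * t ^ p₁} := measurableSet_le (by fun_prop) (by fun_prop)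
      calc c * ε / l = c / l * ε := by ring
        _ ≤ c / l * ∫ x in {x : ℝ | |x| ≤ K * t ^ p₁}, e (t, x) := by
            gcongr; exact (hcon t (hRT.trans ht.1)).le
        _ = ∫ x, {x : ℝ | |x| ≤ K * t ^ p₁}.indicator (fun x => c / l * e (t, x)) x := by
            rw [integral_indicator hms, integral_const_mul]
        _ ≤ _ := by
            refine integral_mono (((hei t).const_mul _).indicator hms) j1 fun x => ?_
            by_cases hx : x ∈ {x : ℝ | |x| ≤ K * t ^ p₁}
            · rw [Set.indicator_of_mem hx]
              have hx' : |x| ≤ l := le_trans hx (by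
                rw [hldef]; gcongr; exact ht.2)
              show c / l * e (t, x) ≤ a (x / l) / l * W (t, x)
              rw [aeq (x / l) (by rw [abs_div, abs_of_pos hl0, div_le_one hl0]; exact hx')]
              calc c / l * e (t, x) = 1 / l * (c * e (t, x)) := by ring
                _ ≤ _ := by gcongr; exact hWl _
            · rw [Set.indicator_of_notMem hx]
              exact mul_nonneg (div_nonneg (a0 _) hl0.le) (hW0 _)
    linarith
  have fb : ∀ t, |∫ x, ψ x * D (t, x)| ≤ 4 * (C * (C + 4) * R) := by
    intro t
    have h1 : |∫ x, ψ x * D (t, x)| ≤ ∫ x, 4 * (C * (R * e (t, x) + 1 / R * (Set.Icc (-(2 * m)) (2 * m)).indicator (fun _ => (1:ℝ)) x)) := by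
      rw [← Real.norm_eq_abs]
      refine norm_integral_le_of_norm_le (((((hei t).const_mul _).add ((intI m).const_mul _)).const_mul _).const_mul _)
        (Eventually.of_forall fun x => ?_)
      rw [norm_mul, Real.norm_eq_abs, Real.norm_eq_abs]
      by_cases hx : 2 * m < |x|
      · rw [z0 x hx, abs_zero, zero_mul]
        have := he0 (t, x)
        have : 0 ≤ (Set.Icc (-(2 * m)) (2 * m)).indicator (fun _ => (1:ℝ)) x := 
          Set.indicator_nonneg (fun _ _ => zero_le_one) _
        positivity
      · rw [Set.indicator_of_mem (by rw [Set.mem_Icc, ← abs_le]; linarith), mul_one]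
        refine mul_le_mul ?_ (hDb _ R hR) (abs_nonneg _) (by norm_num)
        refine (abs_sub _ _).trans ?_
        have := AB (x / l); have := AB (x / m); linarith
    rw [integral_const_mul, integral_const_mul, integral_add ((hei t).const_mul _) ((intI m).const_mul _), integral_const_mul, integral_const_mul,
      volI m hm0] at h1
    refine h1.trans ?_
    have e1 : 1 / R * (4 * m) = 4 * R := by rw [hm]; field_simp
    rw [e1]
    have := heb t
    calc 4 * (C * (R * (∫ x, e (t, x)) + 4 * R)) ≤ 4 * (C * (R * C + 4 * R)) := by gcongr
      _ = _ := by ring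
  -- mean value
  have hT : R ^ 3 < 2 * R ^ 3 := by have : 0 < R ^ 3 := by positivity
                                    linarith
  obtain ⟨t, ht, hslope⟩ := exists_hasDerivAt_eq_slope (fun s => ∫ x, ψ x * D (s, x)) 
    (fun t => ∫ x, ψ x * dt D (t, x)) hT 
    (fun t _ => (hF t).continuousAt.continuousWithinAt) (fun t _ => hF t)
  rw [hder t] at hslope
  have b1 := w1 t ⟨ht.1.le, ht.2.le⟩
  have b2 := (abs_le.1 (q3 t)).2
  have b3 := (abs_le.1 (fb (2 * R ^ 3))).2
  have b4 := (abs_le.1 (fb (R ^ 3))).1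
  have b5 : c * ε / l - C ^ 2 / m - 8 * C * B / l ^ 2 ≤ 8 * (C * (C + 4) * R) / R ^ 3 := by
    have : ((∫ x, ψ x * D (2 * R ^ 3, x)) - ∫ x, ψ x * D (R ^ 3, x)) / (2 * R ^ 3 - R ^ 3) ≤ 8 * (C * (C + 4) * R) / R ^ 3 := by
      rw [show 2 * R ^ 3 - R ^ 3 = R ^ 3 by ring]
      gcongr; linarith
    linarith
  have b6 : c * ε ≤ (8 * C * (C + 4) + C ^ 2) * (l / m) + 8 * C * B * (1 / l) := by
    have e2 : 8 * (C * (C + 4) * R) / R ^ 3 = 8 * C * (C + 4) / m := by rw [hm]; field_simp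
    rw [e2] at b5
    have := mul_le_mul_of_nonneg_right b5 hl0.le
    have e3 : (c * ε / l - C ^ 2 / m - 8 * C * B / l ^ 2) * l = c * ε - C ^ 2 * (l / m) - 8 * C * B * (1 / l) := by
      field_simp
    have e4 : 8 * C * (C + 4) / m * l = 8 * C * (C + 4) * (l / m) := by ring
    rw [e3, e4] at this
    linarith
  set S := 8 * C * (C + 4) + C ^ 2 + 8 * C * B + 1 with hS
  have hS0 : 0 < S := by positivity
  have b7 : c * ε ≤ S * (c * ε / (2 * S)) := by
    have hd : 0 ≤ c * ε / (2 * S) := by positivity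
    calc c * ε ≤ _ := b6
      _ ≤ (8 * C * (C + 4) + C ^ 2) * (c * ε / (2 * S)) + 8 * C * B * (c * ε / (2 * S)) := by gcongr
      _ ≤ _ := by rw [← add_mul]; gcongr; linarith
  have e5 : S * (c * ε / (2 * S)) = c * ε / 2 := by field_simp
  have : 0 < c * ε := by positivity
  linarith

theorem dx_add {F G : ℝ × ℝ → ℝ} (hF : Sm F) (hG : Sm G) :
    dx (fun p => F p + G p) = fun p => dx F p + dx G p := by
  funext ⟨t, x⟩
  exact (hasDerivAt_dx (hF.add hG) t x).unique ((hasDerivAt_dx hF t x).add (hasDerivAt_dx hG t x))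
theorem dx_sub {F G : ℝ × ℝ → ℝ} (hF : Sm F) (hG : Sm G) :
    dx (fun p => F p - G p) = fun p => dx F p - dx G p := by
  funext ⟨t, x⟩
  exact (hasDerivAt_dx (hF.sub hG) t x).unique ((hasDerivAt_dx hF t x).sub (hasDerivAt_dx hG t x))
theorem dx_mul {F G : ℝ × ℝ → ℝ} (hF : Sm F) (hG : Sm G) :
    dx (fun p => F p * G p) = fun p => dx F p * G p + F p * dx G p := by
  funext ⟨t, x⟩
  exact (hasDerivAt_dx (hF.mul hG) t x).unique ((hasDerivAt_dx hF t x).mul (hasDerivAt_dx hG t x))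
theorem dx_neg {F : ℝ × ℝ → ℝ} (hF : Sm F) :
    dx (fun p => - F p) = fun p => - dx F p := by
  funext ⟨t, x⟩
  exact (hasDerivAt_dx hF.neg t x).unique (hasDerivAt_dx hF t x).neg
theorem dx_const (c : ℝ) : dx (fun _ => c) = fun _ => 0 := by
  funext ⟨t, x⟩
  exact (hasDerivAt_dx contDiff_const t x).unique (hasDerivAt_const x c)
theorem dt_add {F G : ℝ × ℝ → ℝ} (hF : Sm F) (hG : Sm G) :
    dt (fun p => F p + G p) = fun p => dt F p + dt G p := by
  funext ⟨t, x⟩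
  exact (hasDerivAt_dt (hF.add hG) t x).unique ((hasDerivAt_dt hF t x).add (hasDerivAt_dt hG t x))
theorem dt_sub {F G : ℝ × ℝ → ℝ} (hF : Sm F) (hG : Sm G) :
    dt (fun p => F p - G p) = fun p => dt F p - dt G p := by
  funext ⟨t, x⟩
  exact (hasDerivAt_dt (hF.sub hG) t x).unique ((hasDerivAt_dt hF t x).sub (hasDerivAt_dt hG t x))
theorem dt_mul {F G : ℝ × ℝ → ℝ} (hF : Sm F) (hG : Sm G) :
    dt (fun p => F p * G p) = fun p => dt F p * G p + F p * dt G p := by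
  funext ⟨t, x⟩
  exact (hasDerivAt_dt (hF.mul hG) t x).unique ((hasDerivAt_dt hF t x).mul (hasDerivAt_dt hG t x))
theorem dt_const (c : ℝ) : dt (fun _ => c) = fun _ => 0 := by
  funext ⟨t, x⟩
  exact (hasDerivAt_dt contDiff_const t x).unique (hasDerivAt_const t c)

theorem conslaw (α β γ L : ℝ) (f g w : ℝ × ℝ → ℝ) (hf : Sm f) (hg : Sm g) (hw : Sm w)
    (ef : dt f = fun p => - dx (dx g) p + (α * w p + β * (f p * f p + g p * g p)) * g p)
    (eg : dt g = fun p => dx (dx f) p - (α * w p + β * (f p * f p + g p * g p)) * f p)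
    (ew : dt w = fun p => - dx (dx (dx w)) p - w p * dx w p + γ * (2 * (f p * dx f p + g p * dx g p)))
    (p : ℝ × ℝ) :
    dt (fun p => α / 2 * (w p * w p) - γ * (f p * dx g p - g p * dx f p) + L * w p) p =
    - dx (fun p => -(3 * α / 2) * (dx w p * dx w p) - 2 * γ * (dx f p * dx f p + dx g p * dx g p)
      + α / 3 * (w p * (w p * w p)) - α * γ * (w p * (f p * f p + g p * g p))
      - β * γ / 2 * ((f p * f p + g p * g p) * (f p * f p + g p * g p))
      + L * (1 / 2 * (w p * w p) - γ * (f p * f p + g p * g p))) p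
    + dx (dx (dx (fun p => - (α / 2) * (w p * w p) - γ / 2 * (f p * f p + g p * g p) - L * w p))) p := by
  have hf1 := hf.dx
  have hf2 := hf1.dx
  have hf3 := hf2.dx
  have hg1 := hg.dx
  have hg2 := hg1.dx
  have hg3 := hg2.dx
  have hw1 := hw.dx
  have hw2 := hw1.dx
  have hw3 := hw2.dx
  have ef' : dt (dx f) = fun p => dx (dt f) p := funext fun p => dt_dx hf p
  have eg' : dt (dx g) = fun p => dx (dt g) p := funext fun p => dt_dx hg p
  unfold Sm at *
  simp (disch := (show ContDiff _ _ _; fun_prop)) only [dt_add, dt_sub, dt_mul, dt_const, ef', eg']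
  rw [ef, eg, ew]
  simp (disch := (show ContDiff _ _ _; fun_prop)) only [dx_add, dx_sub, dx_mul, dx_neg, dx_const]
  ring

theorem sup_bound {G G' : ℝ → ℝ} (h : ∀ x, HasDerivAt G (G' x) x) (hc : Continuous G')
    (i1 : Integrable (fun x => G x ^ 2)) (i2 : Integrable (fun x => G' x ^ 2)) (x : ℝ) :
    G x ^ 2 ≤ ∫ y, (G y ^ 2 + G' y ^ 2) := by
  have c : Continuous G := continuous_iff_continuousAt.2 fun x => (h x).continuousAt
  have h2 : ∀ x, HasDerivAt (fun x => G x ^ 2) (2 * G x * G' x) x := fun x => by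
    have := (h x).pow 2
    simp only [Nat.cast_ofNat, Nat.add_one_sub_one, pow_one] at this
    exact this
  have i3 : Integrable (fun x => 2 * G x * G' x) := by
    refine (i1.add i2).mono' (by apply Continuous.aestronglyMeasurable; fun_prop)
      (Eventually.of_forall fun x => ?_)
    rw [Real.norm_eq_abs, abs_le]
    simp only [Pi.add_apply]
    constructor <;> nlinarith [sq_nonneg (G x + G' x), sq_nonneg (G x - G' x)]
  have lim : Tendsto (fun x => G x ^ 2) atBot (nhds 0) :=
    tendsto_zero_of_hasDerivAt_of_integrableOn_Iic (a := 0) (fun x _ => h2 x) i3.integrableOn i1.integrableOn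
  have := integral_Iic_of_hasDerivAt_of_tendsto' (a := x) (fun x _ => h2 x) i3.integrableOn lim
  rw [sub_zero] at this
  rw [← this]
  calc ∫ y in Set.Iic x, 2 * G y * G' y ≤ ∫ y in Set.Iic x, (G y ^ 2 + G' y ^ 2) := by
        refine setIntegral_mono i3.integrableOn (i1.add i2).integrableOn fun y => ?_
        show 2 * G y * G' y ≤ G y ^ 2 + G' y ^ 2
        nlinarith [sq_nonneg (G y - G' y)]
    _ ≤ _ := setIntegral_le_integral (i1.add i2) (Eventually.of_forall fun y => by positivity)

set_option maxHeartbeats 2000000 in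
theorem real_main (α β γ : ℝ) (hα : α < 0) (hγ : γ < 0) (hβ : 0 < β) 
    (f g w : ℝ × ℝ → ℝ) (hf : Sm f) (hg : Sm g) (hw : Sm w)
    (ef : dt f = fun p => - dx (dx g) p + (α * w p + β * (f p * f p + g p * g p)) * g p)
    (eg : dt g = fun p => dx (dx f) p - (α * w p + β * (f p * f p + g p * g p)) * f p)
    (ew : dt w = fun p => - dx (dx (dx w)) p - w p * dx w p + γ * (2 * (f p * dx f p + g p * dx g p)))
    (e : ℝ × ℝ → ℝ) (hedef : e = fun p => w p ^ 2 + dx w p ^ 2 + (f p ^ 2 + g p ^ 2) + (dx f p ^ 2 + dx g p ^ 2))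
    (hei : ∀ t, Integrable (fun x => e (t, x))) (C0 : ℝ) (heb : ∀ t, ∫ x, e (t, x) ≤ C0)
    (p₁ K : ℝ) (hp₁ : 0 < p₁) (hp₁' : p₁ < 2 / 3) (hK : 0 < K) :
    (∀ p, f p ^ 2 + g p ^ 2 ≤ 2 * (C0 + 1)) ∧ ∀ T0 ε : ℝ, 0 < ε →
    ∃ t, T0 ≤ t ∧ ∫ x in {x : ℝ | |x| ≤ K * t ^ p₁}, e (t, x) ≤ ε := by
  have hf1 := hf.dx
  have hg1 := hg.dx
  have hw1 := hw.dx
  have cf := hf.continuous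
  have cg := hg.continuous
  have cw := hw.continuous
  have cf1 := hf1.continuous
  have cg1 := hg1.continuous
  have cw1 := hw1.continuous
  have he0 : ∀ p, 0 ≤ e p := fun p => by rw [hedef]; positivity
  have sb : ∀ F : ℝ × ℝ → ℝ, Sm F → (∀ p, F p ^ 2 + dx F p ^ 2 ≤ e p) → ∀ p, F p ^ 2 ≤ C0 := by
    rintro F hF hFe ⟨t, x⟩
    have c1 := hF.continuous
    have c2 := hF.dx.continuous
    have i1 : Integrable (fun x => F (t, x) ^ 2) := by
      refine (hei t).mono' (by apply Continuous.aestronglyMeasurable; fun_prop) (Eventually.of_forall fun x => ?_)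
      rw [Real.norm_eq_abs, abs_of_nonneg (by positivity)]
      have := hFe (t, x); nlinarith [sq_nonneg (dx F (t, x))]
    have i2 : Integrable (fun x => dx F (t, x) ^ 2) := by
      refine (hei t).mono' (by apply Continuous.aestronglyMeasurable; fun_prop) (Eventually.of_forall fun x => ?_)
      rw [Real.norm_eq_abs, abs_of_nonneg (by positivity)]
      have := hFe (t, x); nlinarith [sq_nonneg (F (t, x))]
    have := sup_bound (G := fun x => F (t, x)) (fun x => hasDerivAt_dx hF t x) (by fun_prop) i1 i2 x
    refine (this.trans ?_).trans (heb t)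
    exact integral_mono (i1.add i2) (hei t) fun x => hFe (t, x)
  have bw := sb w hw (fun p => by rw [hedef]; nlinarith [sq_nonneg (f p), sq_nonneg (g p), sq_nonneg (dx f p), sq_nonneg (dx g p)])
  have bf := sb f hf (fun p => by rw [hedef]; nlinarith [sq_nonneg (w p), sq_nonneg (g p), sq_nonneg (dx w p), sq_nonneg (dx g p)])
  have bg := sb g hg (fun p => by rw [hedef]; nlinarith [sq_nonneg (w p), sq_nonneg (f p), sq_nonneg (dx w p), sq_nonneg (dx f p)])
  have hC0 : 0 ≤ C0 := (sq_nonneg _).trans (bw 0)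
  obtain ⟨M, hM⟩ : ∃ M, M = C0 + 1 := ⟨_, rfl⟩
  have hM1 : 1 ≤ M := by linarith
  have bs : ∀ p, f p ^ 2 + g p ^ 2 ≤ 2 * M := fun p => by have := bf p; have := bg p; linarith
  refine ⟨hM ▸ bs, fun T0 ε hε => ?_⟩
  have wM : ∀ p, |w p| ≤ M := fun p => by
    apply abs_le_of_sq_le_sq _ (by linarith)
    have := bw p; nlinarith
  obtain ⟨A, hA⟩ : ∃ A, A = -α := ⟨_, rfl⟩
  obtain ⟨G, hG⟩ : ∃ G, G = -γ := ⟨_, rfl⟩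
  have hA0 : 0 < A := by linarith
  have hG0 : 0 < G := by linarith
  obtain rfl : α = -A := by linarith
  obtain rfl : γ = -G := by linarith
  obtain ⟨L, hL⟩ : ∃ L, L = A * M + 2 + 1 / G := ⟨_, rfl⟩
  have hL0 : 0 ≤ L := by rw [hL]; positivity
  have hL1 : A * M / 3 + 1 ≤ L / 2 := by
    have : 0 ≤ A * M := by positivity
    have : 0 ≤ 1 / G := by positivity
    rw [hL]; linarith
  have hL2 : A * G * M + 1 ≤ L * G := by
    have : L * G = A * G * M + 2 * G + 1 := by rw [hL]; field_simp
    linarith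
  obtain ⟨c, hc⟩ : ∃ c, c = min (3 * A / 2) (min (2 * G) 1) := ⟨_, rfl⟩
  have hc0 : 0 < c := by rw [hc]; positivity
  have hc1 : c ≤ 3 * A / 2 := hc ▸ min_le_left _ _
  have hc2 : c ≤ 2 * G := hc ▸ (min_le_right _ _).trans (min_le_left _ _)
  have hc3 : c ≤ 1 := hc ▸ (min_le_right _ _).trans (min_le_right _ _)
  have w3 : ∀ p, |w p * (w p * w p)| ≤ M * w p ^ 2 := fun p => by
    rw [abs_mul, ← sq, abs_of_nonneg (sq_nonneg (w p))]
    exact mul_le_mul_of_nonneg_right (wM p) (sq_nonneg _)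
  have ws : ∀ p, |w p * (f p * f p + g p * g p)| ≤ M * (f p ^ 2 + g p ^ 2) := fun p => by
    rw [abs_mul, ← sq, ← sq, abs_of_nonneg (by positivity : 0 ≤ f p ^ 2 + g p ^ 2)]
    exact mul_le_mul_of_nonneg_right (wM p) (by positivity)
  obtain ⟨C, hC⟩ : ∃ C, C = C0 + (3 * A / 2 + 2 * G + (A * M / 3 + L) + (A * G * M + β * G * M + L * G))
    + (A / 2 * M ^ 2 + G * M + L * M) + (A / 2 + G + L) := ⟨_, rfl⟩
  have hpos1 : 0 ≤ 3 * A / 2 + 2 * G + (A * M / 3 + L) + (A * G * M + β * G * M + L * G) := by positivity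
  have hpos2 : 0 ≤ A / 2 * M ^ 2 + G * M + L * M := by positivity
  have hpos3 : 0 ≤ A / 2 + G + L := by positivity
  refine core _ _ _ e (by unfold Sm at *; fun_prop) (by unfold Sm at *; fun_prop) (by unfold Sm at *; fun_prop) (by rw [hedef]; fun_prop) 
    (conslaw (-A) β (-G) L f g w hf hg hw ef eg ew) c C hc0 (by rw [hC]; linarith) he0 ?_ ?_ ?_ ?_ hei
    (fun t => (heb t).trans (by rw [hC]; linarith)) p₁ K hp₁ hp₁' hK T0 ε hε
  · intro p
    have h1 := (abs_le.1 (w3 p)).2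
    have h2 := (abs_le.1 (ws p)).2
    have h1' := mul_le_mul_of_nonneg_left h1 (by positivity : 0 ≤ A / 3)
    have h2' := mul_le_mul_of_nonneg_left h2 (by positivity : 0 ≤ A * G)
    have h3 : 0 ≤ β * G / 2 * ((f p * f p + g p * g p) * (f p * f p + g p * g p)) := by
      have : 0 ≤ (f p * f p + g p * g p) * (f p * f p + g p * g p) := mul_self_nonneg _
      positivity
    have k1 := mul_le_mul_of_nonneg_right hL1 (sq_nonneg (w p))
    have k2 := mul_le_mul_of_nonneg_right hL2 (by positivity : 0 ≤ f p ^ 2 + g p ^ 2)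
    have k3 := mul_le_mul_of_nonneg_right hc1 (sq_nonneg (dx w p))
    have k4 := mul_le_mul_of_nonneg_right hc2 (by positivity : 0 ≤ dx f p ^ 2 + dx g p ^ 2)
    have k5 := mul_le_mul_of_nonneg_right hc3 (by positivity : 0 ≤ w p ^ 2 + (f p ^ 2 + g p ^ 2))
    rw [hedef]
    linarith
  · intro p
    have h1 := (abs_le.1 (w3 p)).1
    have h2 := (abs_le.1 (ws p)).1
    have h1' := mul_le_mul_of_nonneg_left h1 (by positivity : 0 ≤ A / 3)
    have h2' := mul_le_mul_of_nonneg_left h2 (by positivity : 0 ≤ A * G)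
    have h3 := mul_le_mul_of_nonneg_left (mul_le_mul_of_nonneg_right (bs p) (by positivity : 0 ≤ f p ^ 2 + g p ^ 2))
      (by positivity : 0 ≤ β * G / 2)
    have hCe : (3 * A / 2 + 2 * G + (A * M / 3 + L) + (A * G * M + β * G * M + L * G)) * e p ≤ C * e p :=
      mul_le_mul_of_nonneg_right (by rw [hC]; linarith) (he0 p)
    refine le_trans ?_ hCe
    have e1 : dx w p ^ 2 ≤ e p := by rw [hedef]; linarith [sq_nonneg (w p), sq_nonneg (f p), sq_nonneg (g p), sq_nonneg (dx f p), sq_nonneg (dx g p)]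
    have e2 : w p ^ 2 ≤ e p := by rw [hedef]; linarith [sq_nonneg (dx w p), sq_nonneg (f p), sq_nonneg (g p), sq_nonneg (dx f p), sq_nonneg (dx g p)]
    have e3 : f p ^ 2 + g p ^ 2 ≤ e p := by rw [hedef]; linarith [sq_nonneg (dx w p), sq_nonneg (w p), sq_nonneg (dx f p), sq_nonneg (dx g p)]
    have e4 : dx f p ^ 2 + dx g p ^ 2 ≤ e p := by rw [hedef]; linarith [sq_nonneg (dx w p), sq_nonneg (w p), sq_nonneg (f p), sq_nonneg (g p)]
    have k1 := mul_le_mul_of_nonneg_left e1 (by positivity : 0 ≤ 3 * A / 2)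
    have k2 := mul_le_mul_of_nonneg_left e2 (by positivity : 0 ≤ A * M / 3 + L)
    have k3 := mul_le_mul_of_nonneg_left e3 (by positivity : 0 ≤ A * G * M + β * G * M + L * G)
    have k4 := mul_le_mul_of_nonneg_left e4 (by positivity : 0 ≤ 2 * G)
    have k5 : 0 ≤ L * w p ^ 2 := by positivity
    linarith
  · intro p
    have hw2 : w p ^ 2 ≤ M ^ 2 := sq_le_sq.2 ((wM p).trans (le_abs_self M))
    have hl := abs_le.1 (wM p)
    have a1 := mul_le_mul_of_nonneg_left hw2 (by positivity : 0 ≤ A / 2)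
    have a2 := mul_le_mul_of_nonneg_left (bs p) (by positivity : 0 ≤ G / 2)
    have a3 := mul_le_mul_of_nonneg_left hl.1 hL0
    have a4 := mul_le_mul_of_nonneg_left hl.2 hL0
    have a5 : 0 ≤ A / 2 * w p ^ 2 := by positivity
    have a6 : 0 ≤ G / 2 * (f p ^ 2 + g p ^ 2) := by positivity
    rw [abs_le]
    constructor <;> linarith
  · intro p R hR
    have hR0 : 0 < R := by linarith
    have hCe : (A / 2 + G + L) * (R * e p + 1 / R) ≤ C * (R * e p + 1 / R) :=
      mul_le_mul_of_nonneg_right (by rw [hC]; linarith) (by have := he0 p; positivity)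
    refine le_trans ?_ hCe
    have e0 : e p ≤ R * e p := le_mul_of_one_le_left (he0 p) hR
    have r0 : 0 ≤ 1 / R := by positivity
    have e2 : w p ^ 2 ≤ e p := by rw [hedef]; linarith [sq_nonneg (dx w p), sq_nonneg (f p), sq_nonneg (g p), sq_nonneg (dx f p), sq_nonneg (dx g p)]
    have t1 : |(-A) / 2 * (w p * w p)| ≤ A / 2 * (R * e p + 1 / R) := by
      rw [abs_mul, abs_of_nonneg (mul_self_nonneg (w p)), neg_div, abs_neg, abs_of_pos (by positivity : 0 < A / 2)]
      gcongr; linarith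
    have t2 : |-G * (f p * dx g p - g p * dx f p)| ≤ G * (R * e p + 1 / R) := by
      rw [abs_mul, abs_neg, abs_of_pos hG0]
      gcongr
      have : |f p * dx g p - g p * dx f p| ≤ e p := by
        rw [hedef, abs_le]
        constructor <;> nlinarith [sq_nonneg (f p + dx g p), sq_nonneg (f p - dx g p), sq_nonneg (g p + dx f p), sq_nonneg (g p - dx f p), sq_nonneg (w p), sq_nonneg (dx w p)]
      linarith
    have t3 : |L * w p| ≤ L * (R * e p + 1 / R) := by
      rw [abs_mul, abs_of_nonneg hL0]
      gcongr
      have s1 : R * w p ^ 2 ≤ R * e p := by gcongr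
      have s2 : |w p| ≤ R * w p ^ 2 + 1 / R := by
        have s3 : R * w p ^ 2 + 1 / R - |w p| = 1 / R * ((R * |w p| - 1 / 2) ^ 2 + 3 / 4) := by
          rw [← sq_abs (w p)]; field_simp; ring
        have : 0 ≤ 1 / R * ((R * |w p| - 1 / 2) ^ 2 + 3 / 4) := by positivity
        linarith
      linarith
    refine (abs_add_le _ _).trans ?_
    have := abs_sub ((-A) / 2 * (w p * w p)) (-G * (f p * dx g p - g p * dx f p))
    linarith

theorem liminf_zero (G : ℝ → ℝ) (h0 : ∀ t, 0 ≤ G t)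
    (h : ∀ T0 ε : ℝ, 0 < ε → ∃ t, T0 ≤ t ∧ G t ≤ ε) : liminf G atTop = 0 := by
  have hfr : ∀ ε : ℝ, 0 < ε → ∃ᶠ t in atTop, G t ≤ ε := fun ε hε => 
    frequently_atTop.2 fun T0 => h T0 ε hε
  have hb : IsBoundedUnder (· ≥ ·) atTop G := isBoundedUnder_of ⟨0, h0⟩
  have hcb : IsCoboundedUnder (· ≥ ·) atTop G := IsCoboundedUnder.of_frequently_le (hfr 1 one_pos)
  refine le_antisymm (le_of_forall_pos_le_add fun ε hε => ?_) 
    (le_liminf_of_le hcb (Eventually.of_forall h0))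
  rw [zero_add]
  exact liminf_le_of_frequently_le (hfr ε hε) hb

theorem hasDerivAt_cplx {f g : ℝ → ℝ} {f' g' x : ℝ} (hf : HasDerivAt f f' x) (hg : HasDerivAt g g' x) :
    HasDerivAt (fun x => (f x : ℂ) + (g x : ℂ) * Complex.I) ((f' : ℂ) + (g' : ℂ) * Complex.I) x :=
  hf.ofReal_comp.add (hg.ofReal_comp.mul_const _)

theorem int_sq {E : Type*} [NormedAddCommGroup E] [NormedSpace ℝ E] (φ : SchwartzMap ℝ E) :
    Integrable (fun x => ‖φ x‖ ^ 2) := by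
  have := (φ.memLp 2 volume).integrable_norm_pow (by norm_num)
  simpa using this
end SKdV

open SKdV

/-- Decay of the `L²` norms of `∂ₓu, ∂ₓv` and of the `L⁴` norm of `u` on the regions
    `|x| ≤ K t^{p₁}`, `0 < p₁ < 2/3`, in the case `β > 0`. -/
theorem skdv_H1_decay_beta_pos (α β γ : ℝ) (hα : α < 0) (hγ : γ < 0) (hβ : 0 < β)
    (u : ℝ → ℝ → ℂ) (v : ℝ → ℝ → ℝ) (hsol : IsSKdVSolution α β γ u v)
    (p₁ K : ℝ) (hp₁ : 0 < p₁) (hp₁' : p₁ < 2 / 3) (hK : 0 < K) :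
    liminf (fun t : ℝ =>
        ∫ x in {x : ℝ | |x| ≤ K * t ^ p₁},
          ((deriv (v t) x) ^ 2 + ‖deriv (u t) x‖ ^ 2)) atTop = 0 ∧
    liminf (fun t : ℝ =>
        ∫ x in {x : ℝ | |x| ≤ K * t ^ p₁}, ‖u t x‖ ^ 4) atTop = 0 := by
  obtain ⟨hu, hv, su, sv, equ, eqv, C0, hC0⟩ := hsol
  obtain ⟨f, hfd⟩ : ∃ f : ℝ × ℝ → ℝ, f = fun p => (u p.1 p.2).re := ⟨_, rfl⟩
  obtain ⟨g, hgd⟩ : ∃ g : ℝ × ℝ → ℝ, g = fun p => (u p.1 p.2).im := ⟨_, rfl⟩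
  obtain ⟨w, hwd⟩ : ∃ w : ℝ × ℝ → ℝ, w = fun p => v p.1 p.2 := ⟨_, rfl⟩
  have hf : Sm f := by rw [hfd]; exact Complex.reCLM.contDiff.comp hu
  have hg : Sm g := by rw [hgd]; exact Complex.imCLM.contDiff.comp hu
  have hw : Sm w := by rw [hwd]; exact hv
  have ut : ∀ t x, u t x = (f (t, x) : ℂ) + (g (t, x) : ℂ) * Complex.I := fun t x => by
    rw [hfd, hgd]; exact (Complex.re_add_im _).symm
  have vt : ∀ t x, v t x = w (t, x) := fun t x => by rw [hwd]
  have cn : ∀ a b : ℝ, ‖(a : ℂ) + (b : ℂ) * Complex.I‖ ^ 2 = a ^ 2 + b ^ 2 := fun a b => by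
    rw [Complex.sq_norm, Complex.normSq_add_mul_I]
  have un : ∀ t x, ‖u t x‖ ^ 2 = f (t, x) ^ 2 + g (t, x) ^ 2 := fun t x => by rw [ut, cn]
  have du : ∀ t, deriv (u t) = fun x => (dx f (t, x) : ℂ) + (dx g (t, x) : ℂ) * Complex.I := fun t => by
    rw [show u t = fun x => (f (t, x) : ℂ) + (g (t, x) : ℂ) * Complex.I from funext (ut t)]
    funext x
    exact (hasDerivAt_cplx (hasDerivAt_dx hf t x) (hasDerivAt_dx hg t x)).deriv
  have ddu : ∀ t x, iteratedDeriv 2 (u t) x = (dx (dx f) (t, x) : ℂ) + (dx (dx g) (t, x) : ℂ) * Complex.I := fun t x => by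
    rw [iteratedDeriv_succ, iteratedDeriv_one, du]
    exact (hasDerivAt_cplx (hasDerivAt_dx hf.dx t x) (hasDerivAt_dx hg.dx t x)).deriv
  have dut : ∀ t x, deriv (fun s => u s x) t = (dt f (t, x) : ℂ) + (dt g (t, x) : ℂ) * Complex.I := fun t x => by
    rw [show (fun s => u s x) = fun s => (f (s, x) : ℂ) + (g (s, x) : ℂ) * Complex.I from funext fun s => ut s x]
    exact (hasDerivAt_cplx (hasDerivAt_dt hf t x) (hasDerivAt_dt hg t x)).deriv
  have dv : ∀ t, deriv (v t) = fun x => dx w (t, x) := fun t => by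
    rw [show v t = fun x => w (t, x) from funext (vt t)]
    funext x
    exact (hasDerivAt_dx hw t x).deriv
  have ddv : ∀ t, deriv (deriv (v t)) = fun x => dx (dx w) (t, x) := fun t => by
    rw [dv]; funext x
    exact (hasDerivAt_dx hw.dx t x).deriv
  have dddv : ∀ t x, iteratedDeriv 3 (v t) x = dx (dx (dx w)) (t, x) := fun t x => by
    rw [iteratedDeriv_succ, iteratedDeriv_succ, iteratedDeriv_one, ddv]
    exact (hasDerivAt_dx hw.dx.dx t x).deriv
  have dvt : ∀ t x, deriv (fun s => v s x) t = dt w (t, x) := fun t x => by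
    rw [show (fun s => v s x) = fun s => w (s, x) from funext fun s => vt s x]
    exact (hasDerivAt_dt hw t x).deriv
  have dun : ∀ t x, deriv (fun y => ‖u t y‖ ^ 2) x = 2 * (f (t, x) * dx f (t, x) + g (t, x) * dx g (t, x)) := fun t x => by
    rw [show (fun y => ‖u t y‖ ^ 2) = fun y => f (t, y) * f (t, y) + g (t, y) * g (t, y) from 
      funext fun y => by rw [un]; ring]
    have h1 := hasDerivAt_dx hf t x
    have h2 := hasDerivAt_dx hg t x
    rw [((h1.fun_mul h1).fun_add (h2.fun_mul h2)).deriv]; ring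
  have key : ∀ t x, dt f (t, x) + dx (dx g) (t, x) = 
        (α * w (t, x) + β * (f (t, x) * f (t, x) + g (t, x) * g (t, x))) * g (t, x) ∧
      - dt g (t, x) + dx (dx f) (t, x) = 
        (α * w (t, x) + β * (f (t, x) * f (t, x) + g (t, x) * g (t, x))) * f (t, x) := by
    intro t x
    have h := equ t x
    have h5 : (‖u t x‖ : ℂ) ^ 2 = ((f (t, x) ^ 2 + g (t, x) ^ 2 : ℝ) : ℂ) := by
      rw [← un]; push_cast; rfl
    rw [h5, dut, ddu, ut, vt] at h
    have hre := congrArg Complex.re h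
    have him := congrArg Complex.im h
    simp [-Complex.ofReal_add, -Complex.ofReal_pow] at hre him
    constructor <;> linarith
  have ef : dt f = fun p => - dx (dx g) p + (α * w p + β * (f p * f p + g p * g p)) * g p := by
    funext ⟨t, x⟩; have := (key t x).1; linarith
  have eg : dt g = fun p => dx (dx f) p - (α * w p + β * (f p * f p + g p * g p)) * f p := by
    funext ⟨t, x⟩; have := (key t x).2; linarith
  have ew : dt w = fun p => - dx (dx (dx w)) p - w p * dx w p + γ * (2 * (f p * dx f p + g p * dx g p)) := by
    funext ⟨t, x⟩
    have h := eqv t x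
    rw [dvt, dddv, vt, dv, dun] at h
    linarith
  obtain ⟨e, hed⟩ : ∃ e : ℝ × ℝ → ℝ, e = fun p => w p ^ 2 + dx w p ^ 2 + (f p ^ 2 + g p ^ 2) + (dx f p ^ 2 + dx g p ^ 2) := ⟨_, rfl⟩
  have dun2 : ∀ t x, ‖deriv (u t) x‖ ^ 2 = dx f (t, x) ^ 2 + dx g (t, x) ^ 2 := fun t x => by
    rw [du, cn]
  have ee : ∀ t x, e (t, x) = ‖u t x‖ ^ 2 + ‖deriv (u t) x‖ ^ 2 + (v t x) ^ 2 + (deriv (v t) x) ^ 2 := fun t x => by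
    rw [hed, un, dun2, dv, vt]; ring
  have I1 : ∀ t, Integrable (fun x => ‖u t x‖ ^ 2) := fun t => by
    obtain ⟨φ, hφ⟩ := su t
    simpa [hφ] using int_sq φ
  have I2 : ∀ t, Integrable (fun x => ‖deriv (u t) x‖ ^ 2) := fun t => by
    obtain ⟨φ, hφ⟩ := su t
    have : u t = φ := funext fun x => (hφ x).symm
    rw [this]
    exact int_sq (SchwartzMap.derivCLM ℝ ℂ φ)
  have I3 : ∀ t, Integrable (fun x => (v t x) ^ 2) := fun t => by
    obtain ⟨φ, hφ⟩ := sv t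
    simpa [hφ] using int_sq φ
  have I4 : ∀ t, Integrable (fun x => (deriv (v t) x) ^ 2) := fun t => by
    obtain ⟨φ, hφ⟩ := sv t
    have : v t = φ := funext fun x => (hφ x).symm
    rw [this]
    simpa using int_sq (SchwartzMap.derivCLM ℝ ℝ φ)
  have hei : ∀ t, Integrable (fun x => e (t, x)) := fun t => by
    simp_rw [ee]
    exact (((I1 t).add (I2 t)).add (I3 t)).add (I4 t)
  have heb : ∀ t, ∫ x, e (t, x) ≤ C0 := fun t => by
    simp_rw [ee]
    have J2 : Integrable (fun x => ‖u t x‖ ^ 2 + ‖deriv (u t) x‖ ^ 2) := (I1 t).add (I2 t)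
    have J3 : Integrable (fun x => ‖u t x‖ ^ 2 + ‖deriv (u t) x‖ ^ 2 + (v t x) ^ 2) := J2.add (I3 t)
    rw [integral_add J3 (I4 t), integral_add J2 (I3 t), integral_add (I1 t) (I2 t)]
    exact hC0 t
  obtain ⟨hs, hmain⟩ := real_main α β γ hα hγ hβ f g w hf hg hw ef eg ew e hed hei C0 heb p₁ K hp₁ hp₁' hK
  have hC1 : 0 ≤ 2 * (C0 + 1) := le_trans (by positivity) (hs 0)
  constructor
  · refine liminf_zero _ (fun t => integral_nonneg fun x => by positivity) fun T0 ε hε => ?_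
    obtain ⟨t, ht, h⟩ := hmain T0 ε hε
    refine ⟨t, ht, le_trans ?_ h⟩
    refine setIntegral_mono ((I4 t).add (I2 t)).integrableOn (hei t).integrableOn fun x => ?_
    show (deriv (v t) x) ^ 2 + ‖deriv (u t) x‖ ^ 2 ≤ e (t, x)
    rw [ee]
    nlinarith [sq_nonneg ‖u t x‖, sq_nonneg (v t x)]
  · refine liminf_zero _ (fun t => integral_nonneg fun x => by positivity) fun T0 ε hε => ?_
    obtain ⟨t, ht, h⟩ := hmain T0 (ε / (2 * (C0 + 1) + 1)) (by positivity)
    refine ⟨t, ht, ?_⟩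
    calc ∫ x in {x : ℝ | |x| ≤ K * t ^ p₁}, ‖u t x‖ ^ 4 
        ≤ ∫ x in {x : ℝ | |x| ≤ K * t ^ p₁}, (2 * (C0 + 1) + 1) * e (t, x) := by
          refine integral_mono_of_nonneg (Eventually.of_forall fun x => by positivity) 
            ((hei t).const_mul _).integrableOn (Eventually.of_forall fun x => ?_)
          show ‖u t x‖ ^ 4 ≤ (2 * (C0 + 1) + 1) * e (t, x)
          have h1 : ‖u t x‖ ^ 2 ≤ e (t, x) := by
            rw [ee]
            nlinarith [sq_nonneg ‖deriv (u t) x‖, sq_nonneg (v t x), sq_nonneg (deriv (v t) x)]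
          have h2 : ‖u t x‖ ^ 2 ≤ 2 * (C0 + 1) + 1 := by rw [un]; linarith [hs (t, x)]
          calc ‖u t x‖ ^ 4 = ‖u t x‖ ^ 2 * ‖u t x‖ ^ 2 := by ring
            _ ≤ _ := mul_le_mul h2 h1 (by positivity) (by positivity)
      _ = (2 * (C0 + 1) + 1) * ∫ x in {x : ℝ | |x| ≤ K * t ^ p₁}, e (t, x) := integral_const_mul _ _
      _ ≤ (2 * (C0 + 1) + 1) * (ε / (2 * (C0 + 1) + 1)) := by gcongr
      _ = ε := by field_simp
end
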